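/- arXiv:math/0105074 — 8 statements merged into one kernel-verified Lean document; each statement's English description precedes it below -/
import Mathlib

section
/- Under the scaled ABS recursion, for all indices 1 ≤ j ≤ i ≤ m one has vⱼᵀ(A x_{i+1} − b) = 0. In particular, if v₁,…,v_m are linearly independent in ℝ^m, then A x_{m+1} = b, i.e. the scaled ABS algorithm terminates in at most m steps with a solution of the system. -/
open Matrix

/-!
Each update of the Abaffian `H` annihilates the current vector `Aᵀ vᵢ` and keeps annihilating the
earlier ones. Since `pᵢ` lies in the range of `Hᵢᵀ`, the matrix of pairings `vⱼᵀ A pᵢ` is therefore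
lower triangular. The step along `pᵢ` kills the residual component along `vᵢ`, and by triangularity
it leaves the components along earlier `vⱼ` at zero. A triangular matrix of pairings with nonzero
diagonal also makes the `vⱼ` linearly independent, so as soon as there are as many of them as
equations, they span and the residual vanishes.
-/

section Update

variable {K ι κ l : Type*} [Field K] [Fintype ι] [Fintype κ] [Fintype l]

/-- The Abaffian update of ABS methods: the rank-one modification of `H` that annihilates `a`,
with parameter `w`. It is meaningful only when `wᵀ H a ≠ 0`; otherwise it is `H` by the
convention `0⁻¹ = 0`. -/
def abaffianUpdate (H : Matrix l κ K) (a : κ → K) (w : l → K) : Matrix l κ K :=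
  H - (w ⬝ᵥ (H *ᵥ a))⁻¹ • vecMulVec (H *ᵥ a) (w ᵥ* H)

theorem abaffianUpdate_mulVec (H : Matrix l κ K) (a c : κ → K) (w : l → K) :
    abaffianUpdate H a w *ᵥ c =
      H *ᵥ c - ((w ⬝ᵥ (H *ᵥ a))⁻¹ * (w ⬝ᵥ (H *ᵥ c))) • (H *ᵥ a) := by
  rw [abaffianUpdate, sub_mulVec, smul_mulVec, vecMulVec_mulVec, ← dotProduct_mulVec,
    op_smul_eq_smul, smul_smul]

theorem abaffianUpdate_mulVec_self {H : Matrix l κ K} {a : κ → K} {w : l → K}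
    (h : w ⬝ᵥ (H *ᵥ a) ≠ 0) : abaffianUpdate H a w *ᵥ a = 0 := by
  rw [abaffianUpdate_mulVec, inv_mul_cancel₀ h, one_smul, sub_self]

theorem abaffianUpdate_mulVec_eq_zero {H : Matrix l κ K} {c : κ → K} (h : H *ᵥ c = 0)
    (a : κ → K) (w : l → K) : abaffianUpdate H a w *ᵥ c = 0 := by
  rw [abaffianUpdate_mulVec, h, dotProduct_zero, mul_zero, zero_smul, sub_zero]

/-- One step of the scaled ABS iteration for `A x = b`: the move from `x` along `p` after which the
residual is orthogonal to `v`. It is meaningful only when `vᵀ A p ≠ 0`; otherwise it is `x` by the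
convention `r / 0 = 0`. -/
def scaledABSStep (A : Matrix ι κ K) (b v : ι → K) (p x : κ → K) : κ → K :=
  x - ((v ⬝ᵥ (A *ᵥ x - b)) / (v ⬝ᵥ (A *ᵥ p))) • p

theorem dotProduct_residual_scaledABSStep (A : Matrix ι κ K) (b u v : ι → K) (p x : κ → K) :
    u ⬝ᵥ (A *ᵥ scaledABSStep A b v p x - b) =
      u ⬝ᵥ (A *ᵥ x - b) - (v ⬝ᵥ (A *ᵥ x - b)) / (v ⬝ᵥ (A *ᵥ p)) * (u ⬝ᵥ (A *ᵥ p)) := by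
  rw [scaledABSStep, mulVec_sub, mulVec_smul, sub_right_comm, dotProduct_sub, dotProduct_smul,
    smul_eq_mul]

theorem dotProduct_residual_scaledABSStep_self {A : Matrix ι κ K} {v : ι → K} {p : κ → K}
    (h : v ⬝ᵥ (A *ᵥ p) ≠ 0) (b : ι → K) (x : κ → K) :
    v ⬝ᵥ (A *ᵥ scaledABSStep A b v p x - b) = 0 := by
  rw [dotProduct_residual_scaledABSStep, div_mul_cancel₀ _ h, sub_self]

theorem dotProduct_residual_scaledABSStep_of_eq_zero {A : Matrix ι κ K} {u : ι → K} {p : κ → K}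
    (h : u ⬝ᵥ (A *ᵥ p) = 0) (b v : ι → K) (x : κ → K) :
    u ⬝ᵥ (A *ᵥ scaledABSStep A b v p x - b) = u ⬝ᵥ (A *ᵥ x - b) := by
  rw [dotProduct_residual_scaledABSStep, h, mul_zero, sub_zero]

end Update

/-- The directions `p` are `A`-semiconjugate to the scaling vectors `v`: the matrix with entries
`vⱼᵀ A pᵢ` (row `j`, column `i`) is lower triangular with nonzero diagonal. -/
structure IsSemiconjugate {K ι κ α : Type*} [NonUnitalNonAssocSemiring K] [Fintype ι] [Fintype κ]
    [LT α] (A : Matrix ι κ K) (v : α → ι → K) (p : α → κ → K) : Prop where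
  diag_ne_zero : ∀ i, v i ⬝ᵥ (A *ᵥ p i) ≠ 0
  eq_zero_of_lt : ∀ ⦃j i⦄, j < i → v j ⬝ᵥ (A *ᵥ p i) = 0

theorem IsSemiconjugate.linearIndependent {K ι κ α : Type*} [Field K] [Fintype ι] [Fintype κ]
    [Finite α] [LinearOrder α] {A : Matrix ι κ K} {v : α → ι → K} {p : α → κ → K}
    (h : IsSemiconjugate A v p) : LinearIndependent K v := by
  have := Fintype.ofFinite α
  let M : Matrix α α K := of fun j i => v j ⬝ᵥ (A *ᵥ p i)
  have hM : M.det ≠ 0 := by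
    rw [det_of_isLowerTriangular M fun _ _ hji => h.eq_zero_of_lt hji]
    exact Finset.prod_ne_zero_iff.mpr fun i _ => h.diag_ne_zero i
  exact LinearIndependent.of_comp (of fun i => A *ᵥ p i)ᵀ.vecMulLinear
    (linearIndependent_rows_of_det_ne_zero hM)

theorem eq_zero_of_forall_dotProduct_eq_zero_of_span_eq_top {R ι α : Type*} [CommSemiring R]
    [Fintype ι] {v : α → ι → R} (hv : Submodule.span R (Set.range v) = ⊤) {r : ι → R}
    (hr : ∀ j, v j ⬝ᵥ r = 0) : r = 0 := by
  have hzero : (dotProductBilin R R).flip r = 0 := LinearMap.ext_on_range hv hr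
  exact dotProduct_eq_zero r fun u => (dotProduct_comm r u).trans (LinearMap.congr_fun hzero u)

theorem dotProduct_mulVec_transpose_mulVec {R ι κ l : Type*} [CommSemiring R] [Fintype ι]
    [Fintype κ] [Fintype l] (A : Matrix ι κ R) (H : Matrix l κ R) (v : ι → R) (z : l → R) :
    v ⬝ᵥ (A *ᵥ (Hᵀ *ᵥ z)) = (H *ᵥ (Aᵀ *ᵥ v)) ⬝ᵥ z := by
  rw [dotProduct_mulVec, ← mulVec_transpose, dotProduct_mulVec, vecMul_transpose]

section Recursion

variable {K ι κ l : Type*} [Field K] [Fintype ι] [Fintype κ] [Fintype l] {N : ℕ}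
  {A : Matrix ι κ K} {b : ι → K} {H : ℕ → Matrix l κ K} {x : ℕ → κ → K}
  {v : Fin N → ι → K} {z w : Fin N → l → K} {p : Fin N → κ → K}

theorem abaffian_mulVec_eq_zero_of_lt {a : Fin N → κ → K}
    (hden : ∀ i : Fin N, w i ⬝ᵥ (H i *ᵥ a i) ≠ 0)
    (hH : ∀ i : Fin N, H (i + 1) = abaffianUpdate (H i) (a i) (w i))
    {k : ℕ} {j : Fin N} (hjk : j < k) (hkN : k ≤ N) : H k *ᵥ a j = 0 := by
  induction k, hjk using Nat.le_induction with
  | base => rw [hH j, abaffianUpdate_mulVec_self (hden j)]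
  | succ k _ ih =>
    rw [hH ⟨k, hkN⟩]
    exact abaffianUpdate_mulVec_eq_zero (ih (Nat.le_of_succ_le hkN)) _ _

theorem isSemiconjugate_of_abaffian
    (hp : ∀ i : Fin N, p i = (H i)ᵀ *ᵥ z i)
    (hpden : ∀ i : Fin N, v i ⬝ᵥ (A *ᵥ p i) ≠ 0)
    (hHden : ∀ i : Fin N, w i ⬝ᵥ (H i *ᵥ (Aᵀ *ᵥ v i)) ≠ 0)
    (hH : ∀ i : Fin N, H (i + 1) = abaffianUpdate (H i) (Aᵀ *ᵥ v i) (w i)) :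
    IsSemiconjugate A v p where
  diag_ne_zero := hpden
  eq_zero_of_lt j i hji := by
    rw [hp i, dotProduct_mulVec_transpose_mulVec,
      abaffian_mulVec_eq_zero_of_lt (a := fun i => Aᵀ *ᵥ v i) hHden hH hji i.is_le',
      zero_dotProduct]

theorem IsSemiconjugate.dotProduct_residual_eq_zero_of_lt (h : IsSemiconjugate A v p)
    (hx : ∀ i : Fin N, x (i + 1) = scaledABSStep A b (v i) (p i) (x i))
    {k : ℕ} {j : Fin N} (hjk : j < k) (hkN : k ≤ N) : v j ⬝ᵥ (A *ᵥ x k - b) = 0 := by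
  induction k, hjk using Nat.le_induction with
  | base => rw [hx j, dotProduct_residual_scaledABSStep_self (h.diag_ne_zero j)]
  | succ k hjk ih =>
    have hconj : v j ⬝ᵥ (A *ᵥ p ⟨k, hkN⟩) = 0 := h.eq_zero_of_lt hjk
    rw [hx ⟨k, hkN⟩, dotProduct_residual_scaledABSStep_of_eq_zero hconj]
    exact ih (Nat.le_of_succ_le hkN)

theorem IsSemiconjugate.mulVec_eq_of_card_eq (h : IsSemiconjugate A v p)
    (hx : ∀ i : Fin N, x (i + 1) = scaledABSStep A b (v i) (p i) (x i))
    (hN : Fintype.card ι = N) : A *ᵥ x N = b := by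
  have hspan : Submodule.span K (Set.range v) = ⊤ :=
    h.linearIndependent.span_eq_top_of_card_eq_finrank' (by simp [hN])
  exact sub_eq_zero.mp <| eq_zero_of_forall_dotProduct_eq_zero_of_span_eq_top hspan fun j =>
    h.dotProduct_residual_eq_zero_of_lt hx j.is_lt le_rfl

theorem scaledABS_residual_orthogonality_and_termination_general
    (hp : ∀ i : Fin N, p i = (H i)ᵀ *ᵥ z i)
    (hpden : ∀ i : Fin N, v i ⬝ᵥ (A *ᵥ p i) ≠ 0)
    (hx : ∀ i : Fin N, x (i + 1) = scaledABSStep A b (v i) (p i) (x i))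
    (hHden : ∀ i : Fin N, w i ⬝ᵥ (H i *ᵥ (Aᵀ *ᵥ v i)) ≠ 0)
    (hH : ∀ i : Fin N, H (i + 1) = abaffianUpdate (H i) (Aᵀ *ᵥ v i) (w i)) :
    (∀ j i : Fin N, j ≤ i → v j ⬝ᵥ (A *ᵥ x (i + 1) - b) = 0) ∧
    (Fintype.card ι = N → A *ᵥ x N = b) := by
  have hconj : IsSemiconjugate A v p := isSemiconjugate_of_abaffian hp hpden hHden hH
  exact ⟨fun j i hji =>
    hconj.dotProduct_residual_eq_zero_of_lt hx (Nat.lt_succ_of_le hji) i.is_lt,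
    hconj.mulVec_eq_of_card_eq hx⟩

end Recursion

/-- Under the scaled ABS recursion (here `H 0 = H₁`, `x 0 = x₁`, and step `i : Fin m`
produces `x (i+1) = x_{i+2}` in the paper's 1-based numbering), one has
`vⱼᵀ (A x_{i+1} − b) = 0` for all `j ≤ i`; in particular, if the scaling vectors
`v₁,…,v_m` are linearly independent, then `A x_{m+1} = b`, i.e. the scaled ABS
algorithm terminates in at most `m` steps with a solution of the system. -/
theorem scaledABS_residual_orthogonality_and_termination
    (m n : ℕ) (hmn : m ≤ n)
    (A : Matrix (Fin m) (Fin n) ℝ) (b : Fin m → ℝ)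
    (H : ℕ → Matrix (Fin n) (Fin n) ℝ) (x : ℕ → Fin n → ℝ)
    (v : Fin m → Fin m → ℝ) (z w : Fin m → Fin n → ℝ)
    (p : Fin m → Fin n → ℝ)
    (hH0 : IsUnit (H 0).det)
    (hp : ∀ i : Fin m, p i = (H ↑i)ᵀ *ᵥ z i)
    (hpden : ∀ i : Fin m, v i ⬝ᵥ (A *ᵥ p i) ≠ 0)
    (hx : ∀ i : Fin m,
      x (↑i + 1) = x ↑i - ((v i ⬝ᵥ (A *ᵥ x ↑i - b)) / (v i ⬝ᵥ (A *ᵥ p i))) • p i)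
    (hHden : ∀ i : Fin m, w i ⬝ᵥ (H ↑i *ᵥ (Aᵀ *ᵥ v i)) ≠ 0)
    (hH : ∀ i : Fin m,
      H (↑i + 1) = H ↑i -
        (w i ⬝ᵥ (H ↑i *ᵥ (Aᵀ *ᵥ v i)))⁻¹ •
          vecMulVec (H ↑i *ᵥ (Aᵀ *ᵥ v i)) (w i ᵥ* H ↑i)) :
    (∀ j i : Fin m, j ≤ i → v j ⬝ᵥ (A *ᵥ x (↑i + 1) - b) = 0) ∧
    (LinearIndependent ℝ v → A *ᵥ x m = b) := by
  exact (scaledABS_residual_orthogonality_and_termination_general hp hpden hx hHden hH).imp_right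
    fun hsol _ => hsol (Fintype.card_fin m)
end

section
/- Under the scaled ABS recursion with m = n, suppose A is nonsingular and V = (v₁,…,vₙ) is nonsingular. Then the matrix P = (p₁,…,pₙ) whose columns are the search vectors is nonsingular, the matrix L = Vᵀ A P is nonsingular, and A⁻¹ = P L⁻¹ Vᵀ. -/
open Matrix

/-!
Updating `H` along `s` makes it annihilate `s` and preserves what it already annihilates, so `H_j`
kills `Aᵀ v_i` for every `i < j`. Since `p_j` lies in the range of `H_jᵀ`, this gives
`v_iᵀ A p_j = 0` for `i < j`: the matrix `L = Vᵀ A P` is lower triangular, and its diagonal entries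
`v_iᵀ A p_i` are nonzero. Since `V` is square, the identity `Vᵀ (A P L⁻¹) = 1` commutes into
`A (P L⁻¹ Vᵀ) = 1`.
-/

section MatrixProducts

variable {R m n : Type*} [CommRing R] [Fintype m] [DecidableEq m]

lemma isUnit_det_iff_of_isLowerTriangular [LinearOrder m] {M : Matrix m m R}
    (hM : M.IsLowerTriangular) : IsUnit M.det ↔ ∀ i, IsUnit (M i i) := by
  rw [det_of_isLowerTriangular M hM, IsUnit.prod_univ_iff]

variable [Fintype n]

lemma linearIndependent_col_of_isUnit_det_mul {B : Matrix m n R} {C : Matrix n m R}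
    (h : IsUnit (B * C).det) : LinearIndependent R C.col := by
  have hinj : Function.Injective (B * C).mulVec :=
    mulVec_injective_of_isUnit ((isUnit_iff_isUnit_det _).2 h)
  refine mulVec_injective_iff.1 (Function.Injective.of_comp (f := B.mulVec) ?_)
  simpa only [Function.comp_def, mulVec_mulVec] using hinj

lemma mul_mul_inv_mul_eq_one_of_isUnit_det {B : Matrix m m R} {A : Matrix m n R}
    {C : Matrix n m R} (h : IsUnit (B * A * C).det) :
    A * (C * (B * A * C)⁻¹ * B) = 1 := by
  have hright : B * (A * C * (B * A * C)⁻¹) = 1 := by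
    simpa only [Matrix.mul_assoc] using mul_nonsing_inv _ h
  simpa only [Matrix.mul_assoc] using mul_eq_one_comm.1 hright

end MatrixProducts

section ABSUpdate

variable {K κ ι : Type*} [Field K] [Fintype κ] [Fintype ι]

/-- The ABS update of `H` along `s` with parameter `w`, that is, Wedderburn's rank-one reduction
`H - (H s)(wᵀ H) / (wᵀ H s)`. The recursion for `A x = b` uses it with `s = Aᵀ v_i`. When
`wᵀ H s = 0` the value is `H`. -/
def absUpdate (H : Matrix κ ι K) (s : ι → K) (w : κ → K) : Matrix κ ι K :=
  H - (w ⬝ᵥ (H *ᵥ s))⁻¹ • vecMulVec (H *ᵥ s) (w ᵥ* H)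

lemma absUpdate_mulVec (H : Matrix κ ι K) (s : ι → K) (w : κ → K) (y : ι → K) :
    absUpdate H s w *ᵥ y =
      H *ᵥ y - ((w ⬝ᵥ (H *ᵥ s))⁻¹ * (w ⬝ᵥ (H *ᵥ y))) • (H *ᵥ s) := by
  rw [absUpdate, sub_mulVec, smul_mulVec, vecMulVec_mulVec, op_smul_eq_smul, smul_smul,
    ← dotProduct_mulVec]

lemma absUpdate_mulVec_self {H : Matrix κ ι K} {s : ι → K} {w : κ → K}
    (h : w ⬝ᵥ (H *ᵥ s) ≠ 0) : absUpdate H s w *ᵥ s = 0 := by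
  rw [absUpdate_mulVec, inv_mul_cancel₀ h, one_smul, sub_self]

lemma absUpdate_mulVec_eq_zero {H : Matrix κ ι K} {y : ι → K} (hy : H *ᵥ y = 0)
    (s : ι → K) (w : κ → K) : absUpdate H s w *ᵥ y = 0 := by
  rw [absUpdate_mulVec, hy, dotProduct_zero, mul_zero, zero_smul, sub_zero]

variable {m : ℕ} {H : ℕ → Matrix κ ι K} {s : Fin m → ι → K} {w : Fin m → κ → K}

lemma mulVec_eq_zero_of_absUpdate (hden : ∀ i : Fin m, w i ⬝ᵥ (H ↑i *ᵥ s i) ≠ 0)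
    (hH : ∀ i : Fin m, H (↑i + 1) = absUpdate (H ↑i) (s i) (w i))
    (i : Fin m) {k : ℕ} (hik : ↑i < k) (hkm : k ≤ m) : H k *ᵥ s i = 0 := by
  induction k, Nat.succ_le_of_lt hik using Nat.le_induction with
  | base => rw [Nat.succ_eq_add_one, hH i, absUpdate_mulVec_self (hden i)]
  | succ k hk ih =>
    rw [hH ⟨k, hkm⟩]
    exact absUpdate_mulVec_eq_zero (ih hk (Nat.le_of_lt hkm)) _ _

lemma dotProduct_transpose_mulVec_eq_zero_of_absUpdate
    (hden : ∀ i : Fin m, w i ⬝ᵥ (H ↑i *ᵥ s i) ≠ 0)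
    (hH : ∀ i : Fin m, H (↑i + 1) = absUpdate (H ↑i) (s i) (w i))
    {i j : Fin m} (hij : i < j) (z : κ → K) : s i ⬝ᵥ ((H ↑j)ᵀ *ᵥ z) = 0 := by
  rw [dotProduct_transpose_mulVec, mulVec_eq_zero_of_absUpdate hden hH i hij j.is_le',
    dotProduct_zero]

end ABSUpdate

section ScaledABS

variable {K κ ι μ : Type*} [Field K] [Fintype κ] [Fintype ι] [Fintype μ] {m : ℕ}
  {A : Matrix μ ι K} {H : ℕ → Matrix κ ι K} {v : Fin m → μ → K}
  {z w : Fin m → κ → K} {p : Fin m → ι → K}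

lemma scaledABS_isLowerTriangular (hp : ∀ i : Fin m, p i = (H ↑i)ᵀ *ᵥ z i)
    (hHden : ∀ i : Fin m, w i ⬝ᵥ (H ↑i *ᵥ (Aᵀ *ᵥ v i)) ≠ 0)
    (hH : ∀ i : Fin m, H (↑i + 1) = absUpdate (H ↑i) (Aᵀ *ᵥ v i) (w i)) :
    ((of fun a i => v i a)ᵀ * A * of fun a i => p i a).IsLowerTriangular := by
  intro i j (hij : i < j)
  calc ((of fun a i => v i a)ᵀ * A * of fun a i => p i a) i j
    _ = (v i ᵥ* A) ⬝ᵥ p j := rfl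
    _ = (Aᵀ *ᵥ v i) ⬝ᵥ ((H ↑j)ᵀ *ᵥ z j) := by rw [mulVec_transpose A, hp j]
    _ = 0 := dotProduct_transpose_mulVec_eq_zero_of_absUpdate hHden hH hij (z j)

lemma scaledABS_isUnit_det (hp : ∀ i : Fin m, p i = (H ↑i)ᵀ *ᵥ z i)
    (hpden : ∀ i : Fin m, v i ⬝ᵥ (A *ᵥ p i) ≠ 0)
    (hHden : ∀ i : Fin m, w i ⬝ᵥ (H ↑i *ᵥ (Aᵀ *ᵥ v i)) ≠ 0)
    (hH : ∀ i : Fin m, H (↑i + 1) = absUpdate (H ↑i) (Aᵀ *ᵥ v i) (w i)) :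
    IsUnit ((of fun a i => v i a)ᵀ * A * of fun a i => p i a).det := by
  refine (isUnit_det_iff_of_isLowerTriangular
    (scaledABS_isLowerTriangular hp hHden hH)).2 fun i => ?_
  have hdiag : ((of fun a i => v i a)ᵀ * A * of fun a i => p i a) i i = v i ⬝ᵥ (A *ᵥ p i) :=
    (dotProduct_mulVec (v i) A (p i)).symm
  exact hdiag ▸ (hpden i).isUnit

theorem scaledABS_inverse_factorization_general {A : Matrix (Fin m) ι K} {v : Fin m → Fin m → K}
    (hp : ∀ i : Fin m, p i = (H ↑i)ᵀ *ᵥ z i)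
    (hpden : ∀ i : Fin m, v i ⬝ᵥ (A *ᵥ p i) ≠ 0)
    (hHden : ∀ i : Fin m, w i ⬝ᵥ (H ↑i *ᵥ (Aᵀ *ᵥ v i)) ≠ 0)
    (hH : ∀ i : Fin m, H (↑i + 1) = absUpdate (H ↑i) (Aᵀ *ᵥ v i) (w i)) :
    LinearIndependent K p ∧
    IsUnit ((of fun a i => v i a)ᵀ * A * of fun a i => p i a).det ∧
    A * ((of fun a i => p i a) * ((of fun a i => v i a)ᵀ * A * of fun a i => p i a)⁻¹ *
      (of fun a i => v i a)ᵀ) = 1 :=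
  have hL := scaledABS_isUnit_det hp hpden hHden hH
  ⟨linearIndependent_col_of_isUnit_det_mul hL, hL, mul_mul_inv_mul_eq_one_of_isUnit_det hL⟩

end ScaledABS

/-- Under the scaled ABS recursion with `m = n`, if `A` is nonsingular and the
matrix `V = (v₁,…,vₙ)` of scaling vectors is nonsingular, then the matrix
`P = (p₁,…,pₙ)` of search vectors is nonsingular, `L = Vᵀ A P` is nonsingular,
and `A⁻¹ = P L⁻¹ Vᵀ` (the semiexplicit factorization of the inverse). -/
theorem scaledABS_inverse_factorization
    (n : ℕ)
    (A : Matrix (Fin n) (Fin n) ℝ) (hA : IsUnit A.det) (b : Fin n → ℝ)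
    (H : ℕ → Matrix (Fin n) (Fin n) ℝ) (x : ℕ → Fin n → ℝ)
    (v : Fin n → Fin n → ℝ) (z w : Fin n → Fin n → ℝ)
    (p : Fin n → Fin n → ℝ)
    (hH0 : IsUnit (H 0).det)
    (hV : IsUnit (Matrix.of fun a i : Fin n => v i a).det)
    (hp : ∀ i : Fin n, p i = (H ↑i)ᵀ *ᵥ z i)
    (hpden : ∀ i : Fin n, v i ⬝ᵥ (A *ᵥ p i) ≠ 0)
    (hx : ∀ i : Fin n,
      x (↑i + 1) = x ↑i - ((v i ⬝ᵥ (A *ᵥ x ↑i - b)) / (v i ⬝ᵥ (A *ᵥ p i))) • p i)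
    (hHden : ∀ i : Fin n, w i ⬝ᵥ (H ↑i *ᵥ (Aᵀ *ᵥ v i)) ≠ 0)
    (hH : ∀ i : Fin n,
      H (↑i + 1) = H ↑i -
        (w i ⬝ᵥ (H ↑i *ᵥ (Aᵀ *ᵥ v i)))⁻¹ •
          vecMulVec (H ↑i *ᵥ (Aᵀ *ᵥ v i)) (w i ᵥ* H ↑i)) :
    IsUnit (Matrix.of fun a i : Fin n => p i a).det ∧
    IsUnit ((Matrix.of fun a i : Fin n => v i a)ᵀ * A *
      (Matrix.of fun a i : Fin n => p i a)).det ∧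
    A⁻¹ = (Matrix.of fun a i : Fin n => p i a) *
      ((Matrix.of fun a i : Fin n => v i a)ᵀ * A *
        (Matrix.of fun a i : Fin n => p i a))⁻¹ *
      (Matrix.of fun a i : Fin n => v i a)ᵀ := by
  obtain ⟨hP, hL, hinv⟩ := scaledABS_inverse_factorization_general hp hpden hHden hH
  exact ⟨(isUnit_iff_isUnit_det _).1 (linearIndependent_cols_iff_isUnit.1 hP), hL,
    inv_eq_right_inv hinv⟩
end

section
/- Under the Abaffian recursion carried out through step i, let V_i = (v₁,…,v_i) ∈ ℝ^{m×i} and W_i = (w₁,…,w_i) ∈ ℝ^{n×i}. Then the i×i matrix W_iᵀ H₁ Aᵀ V_i is invertible and the Abaffian satisfies the explicit representation H_{i+1} = H₁ − H₁ Aᵀ V_i (W_iᵀ H₁ Aᵀ V_i)⁻¹ W_iᵀ H₁. -/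
open Matrix

/-!
One step of the recursion is a Wedderburn rank reduction `G ↦ G - G Y (Z G Y)⁻¹ Z G` with `Y` a
single column and `Z` a single row. The middle factor `Z₂ G' Y₂` of a second reduction, applied to
the reduced matrix `G'`, is the Schur complement of `Z₁ G Y₁` in the block matrix formed from the
stacked rows `Z₁, Z₂` and columns `Y₁, Y₂`. Block inversion therefore merges the two reductions
into one, so by induction all the steps together amount to a single reduction of `H₁`.
-/

lemma fromCols_init_last {α κ : Type*} {k : ℕ} (y : Fin (k + 1) → κ → α) :
    fromCols (of (Fin.init y))ᵀ (replicateCol (Fin 1) (y (Fin.last k))) =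
      (of y)ᵀ.submatrix id finSumFinEquiv := by
  ext a (j | j)
  · rfl
  · rw [Subsingleton.elim j 0]; rfl

lemma fromRows_init_last {α ι : Type*} {k : ℕ} (z : Fin (k + 1) → ι → α) :
    fromRows (of (Fin.init z)) (replicateRow (Fin 1) (z (Fin.last k))) =
      (of z).submatrix finSumFinEquiv id := by
  ext (j | j) a
  · rfl
  · rw [Subsingleton.elim j 0]; rfl

section Products

variable {R ι κ p q : Type*} [Semiring R] [Fintype ι] [Fintype κ]

lemma fromRows_mul_mul_fromCols (G : Matrix ι κ R) (Y₁ : Matrix κ p R) (Z₁ : Matrix p ι R)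
    (Y₂ : Matrix κ q R) (Z₂ : Matrix q ι R) :
    fromRows Z₁ Z₂ * G * fromCols Y₁ Y₂ =
      fromBlocks (Z₁ * G * Y₁) (Z₁ * G * Y₂) (Z₂ * G * Y₁) (Z₂ * G * Y₂) := by
  rw [fromRows_mul, fromRows_mul_fromCols]

lemma submatrix_mul_mul_submatrix {p' q' : Type*} (G : Matrix ι κ R) (Y : Matrix κ q R)
    (Z : Matrix p ι R) (e : p' → p) (f : q' → q) :
    Z.submatrix e id * G * Y.submatrix id f = (Z * G * Y).submatrix e f :=
  rfl

lemma replicateRow_mul_mul_replicateCol [Subsingleton p] [DecidableEq p] (G : Matrix ι κ R)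
    (y : κ → R) (z : ι → R) :
    replicateRow p z * G * replicateCol p y = diagonal fun _ => z ⬝ᵥ (G *ᵥ y) := by
  ext a b
  rw [Subsingleton.elim b a, Matrix.mul_assoc, ← replicateCol_mulVec, diagonal_apply_eq]
  rfl

end Products

lemma inv_fromBlocks₁₁_of_isUnit_det {R p q : Type*} [CommRing R] [Fintype p] [DecidableEq p]
    [Fintype q] [DecidableEq q] (A : Matrix p p R) (B : Matrix p q R)
    (C : Matrix q p R) (D : Matrix q q R) (hA : IsUnit A.det) (hS : IsUnit (D - C * A⁻¹ * B).det) :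
    (fromBlocks A B C D)⁻¹ =
      fromBlocks (A⁻¹ + A⁻¹ * B * (D - C * A⁻¹ * B)⁻¹ * C * A⁻¹)
        (-(A⁻¹ * B * (D - C * A⁻¹ * B)⁻¹)) (-((D - C * A⁻¹ * B)⁻¹ * C * A⁻¹))
        (D - C * A⁻¹ * B)⁻¹ := by
  let := invertibleOfIsUnitDet A hA
  rw [← invOf_eq_nonsing_inv A] at hS ⊢
  let := invertibleOfIsUnitDet _ hS
  let := fromBlocks₁₁Invertible A B C D
  simp only [← invOf_eq_nonsing_inv, invOf_fromBlocks₁₁_eq]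

section WedderburnReduction

variable {R ι κ p q : Type*} [CommRing R] [Fintype ι] [Fintype κ]
  [Fintype p] [DecidableEq p] [Fintype q] [DecidableEq q]

/-- The Wedderburn rank reduction of `G` along the columns of `Y` and the rows of `Z`. It is
meaningful when `Z * G * Y` is invertible; otherwise the junk value `0` of the inverse makes
it `G`. -/
noncomputable def wedderburnReduction (G : Matrix ι κ R) (Y : Matrix κ p R) (Z : Matrix p ι R) :
    Matrix ι κ R :=
  G - G * Y * (Z * G * Y)⁻¹ * Z * G

lemma mul_wedderburnReduction_mul {p' q' : Type*} (G : Matrix ι κ R)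
    (Y : Matrix κ p R) (Z : Matrix p ι R) (S : Matrix p' ι R) (T : Matrix κ q' R) :
    S * wedderburnReduction G Y Z * T = S * G * T - S * G * Y * (Z * G * Y)⁻¹ * (Z * G * T) := by
  simp only [wedderburnReduction, Matrix.mul_sub, Matrix.sub_mul, Matrix.mul_assoc]

lemma det_fromRows_mul_mul_fromCols (G : Matrix ι κ R) (Y₁ : Matrix κ p R) (Z₁ : Matrix p ι R)
    (Y₂ : Matrix κ q R) (Z₂ : Matrix q ι R) (h₁ : IsUnit (Z₁ * G * Y₁).det) :
    (fromRows Z₁ Z₂ * G * fromCols Y₁ Y₂).det =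
      (Z₁ * G * Y₁).det * (Z₂ * wedderburnReduction G Y₁ Z₁ * Y₂).det := by
  let := invertibleOfIsUnitDet _ h₁
  rw [fromRows_mul_mul_fromCols, det_fromBlocks₁₁, mul_wedderburnReduction_mul,
    invOf_eq_nonsing_inv]

theorem wedderburnReduction_fromCols_fromRows (G : Matrix ι κ R)
    (Y₁ : Matrix κ p R) (Z₁ : Matrix p ι R) (Y₂ : Matrix κ q R) (Z₂ : Matrix q ι R)
    (h₁ : IsUnit (Z₁ * G * Y₁).det)
    (h₂ : IsUnit (Z₂ * wedderburnReduction G Y₁ Z₁ * Y₂).det) :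
    wedderburnReduction G (fromCols Y₁ Y₂) (fromRows Z₁ Z₂) =
      wedderburnReduction (wedderburnReduction G Y₁ Z₁) Y₂ Z₂ := by
  rw [mul_wedderburnReduction_mul] at h₂
  rw [wedderburnReduction, fromRows_mul_mul_fromCols,
    inv_fromBlocks₁₁_of_isUnit_det _ _ _ _ h₁ h₂, wedderburnReduction, mul_wedderburnReduction_mul]
  generalize (Z₂ * G * Y₂ - Z₂ * G * Y₁ * (Z₁ * G * Y₁)⁻¹ * (Z₁ * G * Y₂))⁻¹ = S
  simp only [wedderburnReduction, mul_fromCols, fromCols_mul_fromBlocks, fromCols_mul_fromRows,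
    Matrix.mul_add, Matrix.add_mul, Matrix.mul_sub, Matrix.sub_mul, Matrix.mul_neg, Matrix.neg_mul,
    Matrix.mul_assoc]
  abel

lemma wedderburnReduction_submatrix_equiv (G : Matrix ι κ R) (Y : Matrix κ p R)
    (Z : Matrix p ι R) (e : q ≃ p) :
    wedderburnReduction G (Y.submatrix id e) (Z.submatrix e id) = wedderburnReduction G Y Z := by
  have hGY : G * Y.submatrix id e = (G * Y).submatrix id e := rfl
  simp only [wedderburnReduction, submatrix_mul_mul_submatrix, inv_submatrix_equiv, hGY,
    submatrix_mul_equiv, submatrix_id_id]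

theorem isUnit_det_and_eq_wedderburnReduction {k : ℕ} (H : ℕ → Matrix ι κ R)
    (y : Fin k → κ → R) (z : Fin k → ι → R)
    (hunit : ∀ j : Fin k, IsUnit (z j ⬝ᵥ (H j *ᵥ y j)))
    (hstep : ∀ j : Fin k, H (j + 1) =
      wedderburnReduction (H j) (replicateCol (Fin 1) (y j)) (replicateRow (Fin 1) (z j))) :
    IsUnit (of z * H 0 * (of y)ᵀ).det ∧ H k = wedderburnReduction (H 0) (of y)ᵀ (of z) := by
  induction k with
  | zero => simp [wedderburnReduction, Subsingleton.elim (of y)ᵀ 0]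
  | succ k ih =>
    obtain ⟨hdet, hHk⟩ := ih (Fin.init y) (Fin.init z)
      (fun j => hunit j.castSucc) (fun j => hstep j.castSucc)
    have hpivot : IsUnit (replicateRow (Fin 1) (z (Fin.last k)) *
        wedderburnReduction (H 0) (of (Fin.init y))ᵀ (of (Fin.init z)) *
          replicateCol (Fin 1) (y (Fin.last k))).det := by
      rw [← hHk, replicateRow_mul_mul_replicateCol, det_diagonal, Fin.prod_const, pow_one]
      exact hunit (Fin.last k)
    constructor
    · rw [← det_submatrix_equiv_self finSumFinEquiv, ← submatrix_mul_mul_submatrix,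
        ← fromCols_init_last, ← fromRows_init_last, det_fromRows_mul_mul_fromCols _ _ _ _ _ hdet]
      exact hdet.mul hpivot
    · calc
        H (k + 1) = wedderburnReduction (H k) (replicateCol (Fin 1) (y (Fin.last k)))
            (replicateRow (Fin 1) (z (Fin.last k))) := hstep (Fin.last k)
        _ = wedderburnReduction (H 0) ((of y)ᵀ.submatrix id finSumFinEquiv)
            ((of z).submatrix finSumFinEquiv id) := by
          rw [hHk, ← wedderburnReduction_fromCols_fromRows _ _ _ _ _ hdet hpivot,
            fromCols_init_last, fromRows_init_last]
        _ = wedderburnReduction (H 0) (of y)ᵀ (of z) := wedderburnReduction_submatrix_equiv ..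

end WedderburnReduction

section Field

variable {K ι κ μ : Type*} [Field K] [Fintype ι] [Fintype κ] [Fintype μ]

lemma wedderburnReduction_replicateCol_replicateRow {p : Type*} [Fintype p] [DecidableEq p]
    [Unique p] (G : Matrix ι κ K) (y : κ → K) (z : ι → K) :
    wedderburnReduction G (replicateCol p y) (replicateRow p z) =
      G - (z ⬝ᵥ (G *ᵥ y))⁻¹ • vecMulVec (G *ᵥ y) (z ᵥ* G) := by
  rw [wedderburnReduction, replicateRow_mul_mul_replicateCol, inv_subsingleton]
  have houter : replicateCol p (G *ᵥ y) * replicateRow p (z ᵥ* G) =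
      vecMulVec (G *ᵥ y) (z ᵥ* G) := by
    ext
    simp [mul_apply, vecMulVec_apply]
  simp [← houter, replicateCol_mulVec, replicateRow_vecMul, ← smul_eq_mul_diagonal,
    Matrix.mul_assoc]

theorem abaffian_explicit_representation_general {k : ℕ} (A : Matrix μ κ K)
    (H : ℕ → Matrix ι κ K) (v : Fin k → μ → K) (w : Fin k → ι → K)
    (hden : ∀ j : Fin k, w j ⬝ᵥ (H j *ᵥ (Aᵀ *ᵥ v j)) ≠ 0)
    (hH : ∀ j : Fin k, H (j + 1) = H j -
      (w j ⬝ᵥ (H j *ᵥ (Aᵀ *ᵥ v j)))⁻¹ • vecMulVec (H j *ᵥ (Aᵀ *ᵥ v j)) (w j ᵥ* H j)) :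
    IsUnit (of w * H 0 * Aᵀ * (of v)ᵀ).det ∧
      H k = H 0 - H 0 * Aᵀ * (of v)ᵀ * (of w * H 0 * Aᵀ * (of v)ᵀ)⁻¹ * of w * H 0 := by
  have hcols : (of fun j => Aᵀ *ᵥ v j)ᵀ = Aᵀ * (of v)ᵀ := rfl
  have hreduction := isUnit_det_and_eq_wedderburnReduction H (fun j => Aᵀ *ᵥ v j) w
    (fun j => (hden j).isUnit)
    (fun j => (hH j).trans (wedderburnReduction_replicateCol_replicateRow ..).symm)
  simpa only [wedderburnReduction, hcols, ← Matrix.mul_assoc] using hreduction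

end Field

/-- Under the Abaffian recursion carried out through step `i` (0-indexed: `H 0 = H₁`
and the recursion hypotheses hold for all steps `j ≤ i`), with
`V_i = (v₁,…,v_i)` and `W_i = (w₁,…,w_i)`, the matrix `W_iᵀ H₁ Aᵀ V_i` is
invertible and `H_{i+1} = H₁ − H₁ Aᵀ V_i (W_iᵀ H₁ Aᵀ V_i)⁻¹ W_iᵀ H₁`. -/
theorem abaffian_explicit_representation
    (m n : ℕ) (hmn : m ≤ n)
    (A : Matrix (Fin m) (Fin n) ℝ)
    (H : ℕ → Matrix (Fin n) (Fin n) ℝ)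
    (v : Fin m → Fin m → ℝ) (w : Fin m → Fin n → ℝ)
    (i : Fin m)
    (hH0 : IsUnit (H 0).det)
    (hHden : ∀ j : Fin m, j ≤ i → w j ⬝ᵥ (H ↑j *ᵥ (Aᵀ *ᵥ v j)) ≠ 0)
    (hH : ∀ j : Fin m, j ≤ i →
      H (↑j + 1) = H ↑j -
        (w j ⬝ᵥ (H ↑j *ᵥ (Aᵀ *ᵥ v j)))⁻¹ •
          vecMulVec (H ↑j *ᵥ (Aᵀ *ᵥ v j)) (w j ᵥ* H ↑j)) :
    ∀ (V : Matrix (Fin m) (Fin (↑i + 1)) ℝ) (W : Matrix (Fin n) (Fin (↑i + 1)) ℝ),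
      V = Matrix.of (fun a j => v (Fin.castLE i.2 j) a) →
      W = Matrix.of (fun a j => w (Fin.castLE i.2 j) a) →
      IsUnit (Wᵀ * H 0 * Aᵀ * V).det ∧
      H (↑i + 1) = H 0 - H 0 * Aᵀ * V * (Wᵀ * H 0 * Aᵀ * V)⁻¹ * Wᵀ * H 0 := by
  rintro _ _ rfl rfl
  exact abaffian_explicit_representation_general A H (fun j => v (Fin.castLE i.2 j))
    (fun j => w (Fin.castLE i.2 j)) (fun j => hHden _ (Nat.lt_succ_iff.mp j.2))
    (fun j => hH (Fin.castLE i.2 j) (Nat.lt_succ_iff.mp j.2))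
end

section
/- Let A be a real m×n matrix with m ≤ n, H₁ ∈ ℝ^{n×n} nonsingular, V = (v₁,…,v_m) ∈ ℝ^{m×m}, W = (w₁,…,w_m) ∈ ℝ^{n×m}, and let Q = Vᵀ A H₁ᵀ W ∈ ℝ^{m×m}. Then the Abaffian recursion defined by these parameters is well defined for all m steps (i.e. one can successively form H₂,…,H_{m+1} with w_iᵀ H_i Aᵀ v_i ≠ 0 for every i = 1,…,m) if and only if Q is strongly nonsingular, i.e. for every k = 1,…,m the leading principal k×k submatrix of Q is nonsingular. -/
open Matrix

/-!
Everything depends only on the pairings `Q a b = w_b ⬝ H₁ x_a`, where `x_a = Aᵀ v_a`. The first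
denominator is the pivot `Q 0 0`, and replacing `H₁` by `H₂` replaces the pairings of the remaining
vectors by the Schur complement of that pivot in `Q`: the recursion is Gaussian elimination on `Q`
without row exchanges. Strong nonsingularity of `Q` likewise amounts to `Q 0 0 ≠ 0` together with
strong nonsingularity of the Schur complement, so both sides satisfy the same recursion in `m`.
-/

section StronglyNonsingular

variable {K : Type*} [Field K] {m : ℕ}

/-- A square matrix is strongly nonsingular if all its leading principal submatrices are
nonsingular. The index `k : Fin m` stands for the leading submatrix of size `k + 1`. -/
def IsStronglyNonsingular (Q : Matrix (Fin m) (Fin m) K) : Prop :=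
  ∀ k : Fin m, IsUnit (Q.submatrix (Fin.castLE k.2) (Fin.castLE k.2)).det

/-- The Schur complement of the top left entry of a square matrix, i.e. what one step of Gaussian
elimination leaves below and to the right of the pivot. It is meaningful when `Q 0 0 ≠ 0`. -/
def firstSchurComplement (Q : Matrix (Fin (m + 1)) (Fin (m + 1)) K) : Matrix (Fin m) (Fin m) K :=
  of fun a b => Q a.succ b.succ - Q a.succ 0 * (Q 0 0)⁻¹ * Q 0 b.succ

theorem det_eq_mul_det_firstSchurComplement {Q : Matrix (Fin (m + 1)) (Fin (m + 1)) K}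
    (pivot_ne_zero : Q 0 0 ≠ 0) : Q.det = Q 0 0 * (firstSchurComplement Q).det := by
  let e : Fin m ⊕ Unit ≃ Fin (m + 1) :=
    ((finSuccEquiv m).trans (Equiv.optionEquivSumPUnit (Fin m))).symm
  let pivot : Matrix Unit Unit K := of fun _ _ => Q 0 0
  have blocks : Q.submatrix e e = fromBlocks (Q.submatrix Fin.succ Fin.succ)
      (of fun a _ => Q a.succ 0) (of fun _ b => Q 0 b.succ) pivot := by
    ext (a | a) (b | b) <;> simp [e, pivot]
  have det_pivot : pivot.det = Q 0 0 := det_unique pivot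
  let _ : Invertible pivot := invertibleOfIsUnitDet pivot (det_pivot ▸ pivot_ne_zero.isUnit)
  have inv_pivot : ⅟pivot = of fun _ _ => (Q 0 0)⁻¹ := by
    ext
    simp [pivot, invOf_eq_nonsing_inv, inv_subsingleton]
  rw [← det_submatrix_equiv_self e Q, blocks, det_fromBlocks₂₂, det_pivot, inv_pivot]
  congr 2
  ext a b
  simp [firstSchurComplement, mul_apply]

theorem isStronglyNonsingular_succ_iff (Q : Matrix (Fin (m + 1)) (Fin (m + 1)) K) :
    IsStronglyNonsingular Q ↔ Q 0 0 ≠ 0 ∧ IsStronglyNonsingular (firstSchurComplement Q) := by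
  have first_minor : IsUnit (Q.submatrix (Fin.castLE (0 : Fin (m + 1)).2)
      (Fin.castLE (0 : Fin (m + 1)).2)).det ↔ Q 0 0 ≠ 0 := by
    rw [isUnit_iff_ne_zero]
    exact not_congr (Eq.congr_left (det_fin_one _))
  rw [IsStronglyNonsingular, Fin.forall_fin_succ, first_minor]
  refine and_congr_right fun pivot_ne_zero => forall_congr' fun k => ?_
  have minor_eq : (Q.submatrix (Fin.castLE k.succ.2) (Fin.castLE k.succ.2)).det =
      Q 0 0 * ((firstSchurComplement Q).submatrix (Fin.castLE k.2) (Fin.castLE k.2)).det :=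
    det_eq_mul_det_firstSchurComplement pivot_ne_zero
  rw [minor_eq, IsUnit.mul_iff, and_iff_right pivot_ne_zero.isUnit]

end StronglyNonsingular

section Abaffian

variable {K : Type*} [Field K] {m : ℕ} {r c : Type*} [Fintype r] [Fintype c]

/-- The Abaffian update of `H` along `x` and `w`, where `x` plays the role of `Aᵀ v`. It is
meaningful when `w ⬝ᵥ (H *ᵥ x) ≠ 0`. -/
def abaffianStep (H : Matrix r c K) (x : c → K) (w : r → K) : Matrix r c K :=
  H - (w ⬝ᵥ (H *ᵥ x))⁻¹ • vecMulVec (H *ᵥ x) (w ᵥ* H)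

/-- The Abaffian recursion started at `H₁` with vectors `x i = Aᵀ v i` and `w i` can be carried out
for all `m` steps with nonzero denominators. Only `H 0, …, H m` are constrained, with `H i` standing
for `H_{i+1}` in the usual numbering. -/
def AbaffianWellDefined (H₁ : Matrix r c K) (x : Fin m → c → K) (w : Fin m → r → K) : Prop :=
  ∃ H : ℕ → Matrix r c K, H 0 = H₁ ∧
    ∀ i : Fin m, w i ⬝ᵥ (H i *ᵥ x i) ≠ 0 ∧ H (i + 1) = abaffianStep (H i) (x i) (w i)

/-- The matrix of pairings `w b ⬝ᵥ (H *ᵥ x a)`, which is `Q = Vᵀ A H₁ᵀ W` for the data of the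
Abaffian recursion. -/
def pairingMatrix (H : Matrix r c K) (x : Fin m → c → K) (w : Fin m → r → K) :
    Matrix (Fin m) (Fin m) K :=
  of fun a b => w b ⬝ᵥ (H *ᵥ x a)

theorem pairingMatrix_eq_mul {p : Type*} [Fintype p] (A : Matrix p c K) (H : Matrix r c K)
    (V : Matrix p (Fin m) K) (W : Matrix r (Fin m) K) :
    pairingMatrix H (fun i => Aᵀ *ᵥ V.col i) W.col = Vᵀ * A * Hᵀ * W := by
  ext a b
  calc W.col b ⬝ᵥ (H *ᵥ (Aᵀ *ᵥ V.col a))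
      = ((V.col a ᵥ* A) ᵥ* Hᵀ) ⬝ᵥ W.col b := by
        rw [dotProduct_comm, mulVec_transpose, vecMul_transpose]
    _ = (Vᵀ * A * Hᵀ * W) a b := by
        rw [vecMul_vecMul, Matrix.mul_assoc Vᵀ]; rfl

theorem dotProduct_abaffianStep_mulVec (H : Matrix r c K) (x z : c → K) (w y : r → K) :
    y ⬝ᵥ (abaffianStep H x w *ᵥ z) =
      y ⬝ᵥ (H *ᵥ z) - w ⬝ᵥ (H *ᵥ z) * (w ⬝ᵥ (H *ᵥ x))⁻¹ * y ⬝ᵥ (H *ᵥ x) := by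
  rw [abaffianStep, sub_mulVec, smul_mulVec, vecMulVec_mulVec, dotProduct_sub, dotProduct_smul,
    op_smul_eq_smul, dotProduct_smul, ← dotProduct_mulVec, smul_eq_mul, smul_eq_mul]
  ring

theorem firstSchurComplement_pairingMatrix (H : Matrix r c K) (x : Fin (m + 1) → c → K)
    (w : Fin (m + 1) → r → K) :
    firstSchurComplement (pairingMatrix H x w) =
      pairingMatrix (abaffianStep H (x 0) (w 0)) (Fin.tail x) (Fin.tail w) := by
  ext a b
  exact (dotProduct_abaffianStep_mulVec H (x 0) (x a.succ) (w 0) (w b.succ)).symm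

theorem abaffianWellDefined_succ_iff (H₁ : Matrix r c K) (x : Fin (m + 1) → c → K)
    (w : Fin (m + 1) → r → K) :
    AbaffianWellDefined H₁ x w ↔ w 0 ⬝ᵥ (H₁ *ᵥ x 0) ≠ 0 ∧
      AbaffianWellDefined (abaffianStep H₁ (x 0) (w 0)) (Fin.tail x) (Fin.tail w) := by
  constructor
  · rintro ⟨H, rfl, steps⟩
    exact ⟨(steps 0).1, fun i => H (i + 1), (steps 0).2, fun i => steps i.succ⟩
  · rintro ⟨pivot_ne_zero, H, H_zero, steps⟩
    exact ⟨fun i => Nat.casesOn i H₁ H, rfl, Fin.cases ⟨pivot_ne_zero, H_zero⟩ steps⟩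

theorem abaffianWellDefined_iff_isStronglyNonsingular_pairingMatrix (H₁ : Matrix r c K)
    (x : Fin m → c → K) (w : Fin m → r → K) :
    AbaffianWellDefined H₁ x w ↔ IsStronglyNonsingular (pairingMatrix H₁ x w) := by
  induction m generalizing H₁ with
  | zero => exact iff_of_true ⟨fun _ => H₁, rfl, fun i => i.elim0⟩ fun k => k.elim0
  | succ m ih =>
    rw [abaffianWellDefined_succ_iff, isStronglyNonsingular_succ_iff,
      firstSchurComplement_pairingMatrix, ih]
    rfl

theorem abaffian_well_defined_iff_strongly_nonsingular_general {p : Type*} [Fintype p]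
    (A : Matrix p c K) (H₁ : Matrix r c K) (V : Matrix p (Fin m) K) (W : Matrix r (Fin m) K) :
    AbaffianWellDefined H₁ (fun i => Aᵀ *ᵥ V.col i) W.col ↔
      IsStronglyNonsingular (Vᵀ * A * H₁ᵀ * W) := by
  rw [abaffianWellDefined_iff_isStronglyNonsingular_pairingMatrix, pairingMatrix_eq_mul]

end Abaffian

/-- The parameter matrices `H₁, V, W` are admissible for the Abaffian recursion
(i.e. all `m` steps can be carried out with nonzero denominators
`w_iᵀ H_i Aᵀ v_i ≠ 0`) iff the matrix `Q = Vᵀ A H₁ᵀ W` is strongly nonsingular,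
i.e. every leading principal submatrix of `Q` is nonsingular. -/
theorem abaffian_well_defined_iff_strongly_nonsingular
    (m n : ℕ) (hmn : m ≤ n)
    (A : Matrix (Fin m) (Fin n) ℝ)
    (H1 : Matrix (Fin n) (Fin n) ℝ) (hH1 : IsUnit H1.det)
    (v : Fin m → Fin m → ℝ) (w : Fin m → Fin n → ℝ)
    (V : Matrix (Fin m) (Fin m) ℝ) (hV : V = Matrix.of fun a j => v j a)
    (W : Matrix (Fin n) (Fin m) ℝ) (hW : W = Matrix.of fun a j => w j a)
    (Q : Matrix (Fin m) (Fin m) ℝ) (hQ : Q = Vᵀ * A * H1ᵀ * W) :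
    (∃ H : ℕ → Matrix (Fin n) (Fin n) ℝ, H 0 = H1 ∧
      ∀ i : Fin m,
        w i ⬝ᵥ (H ↑i *ᵥ (Aᵀ *ᵥ v i)) ≠ 0 ∧
        H (↑i + 1) = H ↑i -
          (w i ⬝ᵥ (H ↑i *ᵥ (Aᵀ *ᵥ v i)))⁻¹ •
            vecMulVec (H ↑i *ᵥ (Aᵀ *ᵥ v i)) (w i ᵥ* H ↑i)) ↔
    (∀ k : Fin m, IsUnit (Q.submatrix (Fin.castLE k.2) (Fin.castLE k.2)).det) := by
  subst hV hW hQ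
  exact abaffian_well_defined_iff_strongly_nonsingular_general A H1 _ _
end

section
/- Consider the integer Abaffian recursion: A ∈ ℤ^{m×n} with m ≤ n, v₁,…,v_m ∈ ℤ^m, H₁ ∈ ℤ^{n×n} unimodular, and for i = 1,…,m suppose s_i = H_i Aᵀ v_i is a nonzero integer vector, δ_i = gcd of the entries of s_i, and w_i ∈ ℤⁿ satisfies w_iᵀ s_i = δ_i, with H_{i+1} = H_i − (s_i)(w_iᵀ H_i)/δ_i. Let b ∈ ℤ^m and fix i with 1 ≤ i ≤ m. If y ∈ ℤⁿ satisfies vⱼᵀ A y = vⱼᵀ b for j = 1,…,i, then every x ∈ ℤⁿ satisfying vⱼᵀ A x = vⱼᵀ b for j = 1,…,i can be written as x = y + H_{i+1}ᵀ q for some integer vector q ∈ ℤⁿ. -/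
open Matrix

/-
Over `ℤ`, unimodularity gives `q` with `H₁ᵀ q = x - y`, and this same `q` works at every step:
the update of `Hⱼ` is a rank-one matrix with column `sⱼ = Hⱼ Aᵀ vⱼ`, so it changes `Hⱼᵀ q = x - y`
only by a multiple of `sⱼ ⬝ q = (Aᵀ vⱼ) ⬝ (Hⱼᵀ q) = vⱼ ⬝ A (x - y) = 0`.
-/

section RankOneUpdate

variable {R l n : Type*} [CommRing R] [Fintype l] [Fintype n]

theorem transpose_sub_vecMulVec_mulVec_eq (H : Matrix l n R) (u : n → R) {c z : n → R} {q : l → R}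
    (hq : Hᵀ *ᵥ q = z) (hc : c ⬝ᵥ z = 0) :
    (H - vecMulVec (H *ᵥ c) u)ᵀ *ᵥ q = z := by
  have hs : H *ᵥ c ⬝ᵥ q = 0 := by
    rw [dotProduct_comm, dotProduct_mulVec, ← mulVec_transpose, hq, dotProduct_comm, hc]
  rw [transpose_sub, sub_mulVec, hq, transpose_vecMulVec, vecMulVec_mulVec, hs,
    MulOpposite.op_zero, zero_smul, sub_zero]

theorem transpose_mulVec_eq_of_rankOne_updates {H : ℕ → Matrix l n R} {z : n → R} {q : l → R}
    (r : ℕ) (hq : (H 0)ᵀ *ᵥ q = z)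
    (hH : ∀ k < r, ∃ c u : n → R, c ⬝ᵥ z = 0 ∧ H (k + 1) = H k - vecMulVec (H k *ᵥ c) u) :
    (H r)ᵀ *ᵥ q = z := by
  induction r with
  | zero => exact hq
  | succ k ih =>
    obtain ⟨c, u, hc, hk⟩ := hH k k.lt_succ_self
    have hqk : (H k)ᵀ *ᵥ q = z := ih fun j hj => hH j (hj.trans k.lt_succ_self)
    rw [hk]
    exact transpose_sub_vecMulVec_mulVec_eq (H k) u hqk hc

end RankOneUpdate

section BaseChange

variable {R S l n : Type*} [Fintype n]

theorem map_transpose_mulVec_dotProduct_map [NonAssocSemiring R] [CommSemiring S] [Fintype l]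
    (f : R →+* S) (A : Matrix l n R) (v : l → R) (z : n → R) :
    (A.map f)ᵀ *ᵥ (f ∘ v) ⬝ᵥ (f ∘ z) = f (v ⬝ᵥ A *ᵥ z) := by
  rw [mulVec_transpose, ← dotProduct_mulVec, f.map_dotProduct]
  congr 1
  ext j
  exact (f.map_mulVec A z j).symm

theorem exists_map_transpose_mulVec_map_eq [CommRing R] [NonAssocSemiring S] [DecidableEq n]
    (f : R →+* S) {M : Matrix n n R} (hM : IsUnit M.det) (z : n → R) :
    ∃ q : n → R, (M.map f)ᵀ *ᵥ (f ∘ q) = f ∘ z := by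
  have hMT : IsUnit Mᵀ := (isUnit_iff_isUnit_det _).mpr (isUnit_det_transpose M hM)
  obtain ⟨q, rfl⟩ := mulVec_surjective_iff_isUnit.mpr hMT z
  exact ⟨q, funext fun j => (f.map_mulVec Mᵀ q j).symm⟩

end BaseChange

-- The row `u j` is `δⱼ⁻¹ wⱼᵀ Hⱼ` in the integer Abaffian recursion.
theorem integer_abaffian_general_solution_general {R S l n : Type*} [CommRing R] [CommRing S]
    [Fintype l] [Fintype n] [DecidableEq n] (f : R →+* S) {m : ℕ} (A : Matrix l n R) (b : l → R)
    (v : Fin m → l → R) {H₁ : Matrix n n R} (hH₁ : IsUnit H₁.det) {H : ℕ → Matrix n n S}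
    (hH0 : H 0 = H₁.map f) (i : Fin m) (u : Fin m → n → S)
    (hH : ∀ j ≤ i, H (↑j + 1) = H ↑j - vecMulVec (H ↑j *ᵥ ((A.map f)ᵀ *ᵥ (f ∘ v j))) (u j))
    (y x : n → R) (hy : ∀ j ≤ i, v j ⬝ᵥ A *ᵥ y = v j ⬝ᵥ b)
    (hx : ∀ j ≤ i, v j ⬝ᵥ A *ᵥ x = v j ⬝ᵥ b) :
    ∃ q : n → R, f ∘ x = f ∘ y + (H (↑i + 1))ᵀ *ᵥ (f ∘ q) := by
  obtain ⟨q, hq⟩ := exists_map_transpose_mulVec_map_eq f hH₁ (x - y)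
  have hqi : (H (↑i + 1))ᵀ *ᵥ (f ∘ q) = f ∘ (x - y) := by
    refine transpose_mulVec_eq_of_rankOne_updates _ (hH0 ▸ hq) fun k hk => ?_
    let j : Fin m := ⟨k, by lia⟩
    have hj : j ≤ i := Nat.le_of_lt_succ hk
    refine ⟨_, u j, ?_, hH j hj⟩
    rw [map_transpose_mulVec_dotProduct_map, mulVec_sub, dotProduct_sub, hx j hj, hy j hj,
      sub_self, map_zero]
  refine ⟨q, ?_⟩
  rw [hqi]
  ext a
  simp only [Function.comp_apply, Pi.add_apply, Pi.sub_apply, map_sub, add_sub_cancel]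

/-- **Integer Abaffian recursion: representation of all integer solutions.**
Under the integer Abaffian recursion carried out through step `i` (0-indexed,
`H 0 = H₁`), if `y ∈ ℤⁿ` satisfies the first `i` scaled equations
`vⱼᵀ A y = vⱼᵀ b`, then every integer solution `x` of these equations can be
written as `x = y + H_{i+1}ᵀ q` for some integer vector `q`. -/
theorem integer_abaffian_general_solution
    (m n : ℕ) (hmn : m ≤ n)
    (A : Matrix (Fin m) (Fin n) ℤ) (b : Fin m → ℤ)
    (v : Fin m → Fin m → ℤ)
    (H1 : Matrix (Fin n) (Fin n) ℤ) (hH1 : IsUnit H1.det)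
    (H : ℕ → Matrix (Fin n) (Fin n) ℚ)
    (hH0 : H 0 = H1.map (Int.cast : ℤ → ℚ))
    (s : Fin m → Fin n → ℤ)
    (i : Fin m)
    (hs : ∀ j : Fin m, j ≤ i →
      (fun a => ((s j a : ℤ) : ℚ)) =
        H ↑j *ᵥ ((A.map (Int.cast : ℤ → ℚ))ᵀ *ᵥ fun k => ((v j k : ℤ) : ℚ)))
    (hs0 : ∀ j : Fin m, j ≤ i → s j ≠ 0)
    (w : Fin m → Fin n → ℤ)
    (hw : ∀ j : Fin m, j ≤ i → w j ⬝ᵥ s j = Finset.univ.gcd (s j))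
    (hH : ∀ j : Fin m, j ≤ i →
      H (↑j + 1) = H ↑j -
        (((Finset.univ.gcd (s j) : ℤ) : ℚ))⁻¹ •
          vecMulVec (fun a => ((s j a : ℤ) : ℚ))
            ((fun k => ((w j k : ℤ) : ℚ)) ᵥ* H ↑j)) :
    ∀ y x : Fin n → ℤ,
      (∀ j : Fin m, j ≤ i → v j ⬝ᵥ (A *ᵥ y) = v j ⬝ᵥ b) →
      (∀ j : Fin m, j ≤ i → v j ⬝ᵥ (A *ᵥ x) = v j ⬝ᵥ b) →
      ∃ q : Fin n → ℤ,
        (fun a => ((x a : ℤ) : ℚ)) =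
          (fun a => ((y a : ℤ) : ℚ)) + (H (↑i + 1))ᵀ *ᵥ fun a => ((q a : ℤ) : ℚ) :=
  integer_abaffian_general_solution_general (Int.castRingHom ℚ) A b v hH1 hH0 i _
    fun j hj => (hH j hj).trans (by rw [← vecMulVec_smul, hs j hj]; rfl)
end

section
/- Consider the integer Abaffian recursion: A ∈ ℤ^{m×n} with m ≤ n, linearly independent v₁,…,v_m ∈ ℤ^m, H₁ ∈ ℤ^{n×n} unimodular, and for i = 1,…,m suppose s_i = H_i Aᵀ v_i is a nonzero integer vector, δ_i = gcd of the entries of s_i, and w_i, z_i ∈ ℤⁿ satisfy w_iᵀ s_i = δ_i and z_iᵀ s_i = δ_i, with H_{i+1} = H_i − (s_i)(w_iᵀ H_i)/δ_i. Let b ∈ ℤ^m, let x₁ ∈ ℤⁿ, and define the (rational) iterates x_{i+1} = x_i − (v_iᵀ(A x_i − b)/δ_i) H_iᵀ z_i for i = 1,…,m. Then the system A x = b has a solution x ∈ ℤⁿ if and only if for every i = 1,…,m the rational number v_iᵀ(A x_i − b)/δ_i is an integer. -/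
open Matrix

/-!
Every Abaffian `H i` is integral, and its row lattice is exactly the lattice of integer vectors
`d` with `v jᵀ A d = 0` for all `j < i`: the update replaces an element `u H i` of this lattice by
its projection `(u - (u ⬝ s i / δ i) w i) H i`, and `u H i` is orthogonal to `Aᵀ v i` exactly when
`u ⬝ s i = 0`. If `y` solves `A y = b` and the iterate `x i` is integral, then `x i - y = u H i`
for some integral `u`, so the residual `v iᵀ (A x i - b) = u ⬝ s i` is divisible by
`δ i = gcd (s i)`. Conversely, as long as the step sizes are integral, so are the iterates, and
`x i` solves the first `i` scaled equations; linear independence of `v` makes `x m` a solution.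
-/

section RowSpace

variable {R ι κ μ : Type*} [CommRing R] [Fintype ι] [Fintype κ] [Fintype μ]

theorem dotProduct_mulVec_vecMul (A : Matrix ι κ R) (G : Matrix μ κ R) (v : ι → R) (u : μ → R) :
    v ⬝ᵥ A *ᵥ (u ᵥ* G) = u ⬝ᵥ G *ᵥ (v ᵥ* A) := by
  rw [dotProduct_mulVec, dotProduct_comm, dotProduct_mulVec]

theorem mem_range_vecMulLinear_sub_vecMulVec_iff [NoZeroDivisors R] {G : Matrix ι κ R}
    {c : κ → R} {q w : ι → R} {δ : R} (hδ : δ ≠ 0) (hq : G *ᵥ c = δ • q) (hw : w ⬝ᵥ G *ᵥ c = δ)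
    (d : κ → R) :
    d ∈ LinearMap.range (G - vecMulVec q (w ᵥ* G)).vecMulLinear ↔
      d ∈ LinearMap.range G.vecMulLinear ∧ c ⬝ᵥ d = 0 := by
  have vecMul_update (u : ι → R) :
      u ᵥ* (G - vecMulVec q (w ᵥ* G)) = (u - (u ⬝ᵥ q) • w) ᵥ* G := by
    rw [vecMul_sub, vecMul_vecMulVec, sub_vecMul, smul_vecMul]
  have dotProduct_row (u : ι → R) : c ⬝ᵥ (u ᵥ* G) = u ⬝ᵥ G *ᵥ c := by
    rw [dotProduct_comm, ← dotProduct_mulVec]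
  simp only [LinearMap.mem_range, vecMulLinear_apply]
  constructor
  · rintro ⟨u, rfl⟩
    refine ⟨⟨_, (vecMul_update u).symm⟩, ?_⟩
    rw [vecMul_update, dotProduct_row, sub_dotProduct, smul_dotProduct, hw, hq, dotProduct_smul,
      smul_eq_mul, smul_eq_mul, mul_comm, sub_self]
  · rintro ⟨⟨u, rfl⟩, hu⟩
    have huq : u ⬝ᵥ q = 0 := by
      rw [dotProduct_row, hq, dotProduct_smul, smul_eq_mul] at hu
      exact (mul_eq_zero.mp hu).resolve_left hδ
    exact ⟨u, by rw [vecMul_update, huq, zero_smul, sub_zero]⟩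

end RowSpace

section Map

theorem comp_mulVec {R S ι κ : Type*} [NonAssocSemiring R] [NonAssocSemiring S] [Fintype κ]
    (f : R →+* S) (M : Matrix ι κ R) (u : κ → R) : f ∘ (M *ᵥ u) = M.map f *ᵥ (f ∘ u) :=
  funext (f.map_mulVec M u)

theorem comp_vecMul {R S ι κ : Type*} [NonAssocSemiring R] [NonAssocSemiring S] [Fintype ι]
    (f : R →+* S) (M : Matrix ι κ R) (u : ι → R) : f ∘ (u ᵥ* M) = (f ∘ u) ᵥ* M.map f :=
  funext (f.map_vecMul M u)

theorem map_sub_vecMulVec {R K ι κ : Type*} [Ring R] [DivisionRing K] [Fintype ι] (f : R →+* K)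
    (G : Matrix ι κ R) {δ : R} (hδ : f δ ≠ 0) (q w : ι → R) :
    (G - vecMulVec q (w ᵥ* G)).map f =
      G.map f - (f δ)⁻¹ • vecMulVec (f ∘ (δ • q)) ((f ∘ w) ᵥ* G.map f) := by
  rw [← comp_vecMul]
  ext a c
  simp [vecMulVec_apply, mul_assoc, inv_mul_cancel_left₀ hδ]

end Map

section PartialSolution

variable {R ι κ : Type*} [CommRing R] [Fintype ι] [Fintype κ] {m : ℕ}

/-- `IsPartialSolution A b v i X` says that `X` solves the first `i` of the scaled equations
`v jᵀ A X = v jᵀ b`. For `b = 0` it describes the row lattice of the `i`-th Abaffian. -/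
def IsPartialSolution (A : Matrix ι κ R) (b : ι → R) (v : Fin m → ι → R) (i : ℕ) (X : κ → R) :
    Prop :=
  ∀ j : Fin m, (j : ℕ) < i → v j ⬝ᵥ A *ᵥ X = v j ⬝ᵥ b

variable {A : Matrix ι κ R} {b b' : ι → R} {v : Fin m → ι → R} {X Y : κ → R}

namespace IsPartialSolution

theorem zero : IsPartialSolution A b v 0 X :=
  fun _ hj => absurd hj (Nat.not_lt_zero _)

theorem add_one_iff (i : Fin m) :
    IsPartialSolution A b v (i + 1) X ↔
      IsPartialSolution A b v i X ∧ v i ⬝ᵥ A *ᵥ X = v i ⬝ᵥ b := by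
  simp only [IsPartialSolution, Nat.lt_succ_iff_lt_or_eq, or_imp, forall_and, ← Fin.ext_iff,
    forall_eq]

theorem of_mulVec_eq (h : A *ᵥ X = b) (i : ℕ) : IsPartialSolution A b v i X :=
  fun j _ => congrArg (v j ⬝ᵥ ·) h

theorem sub {i : ℕ} (hX : IsPartialSolution A b v i X) (hY : IsPartialSolution A b' v i Y) :
    IsPartialSolution A (b - b') v i (X - Y) := fun j hj => by
  rw [mulVec_sub, dotProduct_sub, dotProduct_sub, hX j hj, hY j hj]

theorem mulVec_eq {A : Matrix (Fin m) κ R} {b : Fin m → R} {v : Fin m → Fin m → R}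
    (hv : LinearIndependent R v) (h : IsPartialSolution A b v m X) : A *ᵥ X = b := by
  have mulVec_injective : Function.Injective (of v).mulVec :=
    mulVec_injective_iff.mpr (linearIndependent_col_iff_row.mpr hv)
  exact mulVec_injective (funext fun j => h j j.isLt)

end IsPartialSolution

end PartialSolution

section Abaffian

variable {R K ι κ : Type*} [CommRing R] [Field K] [Fintype ι] [Fintype κ] {m : ℕ}

/-- The step size `vᵀ (A x - b) / δ` of the ABS iteration at `x`, where `f : R →+* K` embeds the
coefficient ring into a field. -/
def absStepSize (f : R →+* K) (A : Matrix ι κ R) (b v : ι → R) (δ : R) (x : κ → K) : K :=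
  ((f ∘ v) ⬝ᵥ (A.map f *ᵥ x - f ∘ b)) / f δ

/-- The Abaffian recursion `H (i + 1) = H i - s i (w iᵀ H i) / δ i` over a field `K`, started at a
matrix that is invertible over the coefficient ring `R`. Over `ℤ` the conditions on `δ i` say that
it is, up to sign, the gcd of the entries of `s i`. -/
structure IsAbaffianRecursion [DecidableEq κ] (f : R →+* K) (A : Matrix ι κ R) (v : Fin m → ι → R)
    (H : ℕ → Matrix κ κ K) (s : Fin m → κ → R) (δ : Fin m → R) (w : Fin m → κ → R) : Prop where
  initial : ∃ G : Matrix κ κ R, IsUnit G ∧ H 0 = G.map f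
  map_pivot (i : Fin m) : f ∘ s i = H i *ᵥ ((A.map f)ᵀ *ᵥ (f ∘ v i))
  pivot_ne_zero (i : Fin m) : s i ≠ 0
  dvd_pivot (i : Fin m) (a : κ) : δ i ∣ s i a
  dotProduct_pivot (i : Fin m) : w i ⬝ᵥ s i = δ i
  update (i : Fin m) :
    H (i + 1) = H i - (f (δ i))⁻¹ • vecMulVec (f ∘ s i) ((f ∘ w i) ᵥ* H i)

/-- The ABS iterates `x (i + 1) = x i - α i H iᵀ z i` with step sizes `α i = absStepSize ..`,
started at a point with coordinates in `R`. -/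
structure IsABSIterate (f : R →+* K) (A : Matrix ι κ R) (b : ι → R) (v : Fin m → ι → R)
    (H : ℕ → Matrix κ κ K) (s : Fin m → κ → R) (δ : Fin m → R) (z : Fin m → κ → R)
    (x : ℕ → κ → K) : Prop where
  initial : ∃ X : κ → R, x 0 = f ∘ X
  dotProduct_pivot (i : Fin m) : z i ⬝ᵥ s i = δ i
  update (i : Fin m) :
    x (i + 1) = x i - absStepSize f A b (v i) (δ i) (x i) • ((H i)ᵀ *ᵥ (f ∘ z i))

variable {f : R →+* K} {A : Matrix ι κ R} {b : ι → R} {v : Fin m → ι → R} {H : ℕ → Matrix κ κ K}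
  {s w z : Fin m → κ → R} {δ : Fin m → R} {x : ℕ → κ → K}

theorem absStepSize_comp_eq_map_iff (hf : Function.Injective f) {δ : R} (hδ : δ ≠ 0) {v : ι → R}
    (X : κ → R) (t : R) :
    absStepSize f A b v δ (f ∘ X) = f t ↔ v ⬝ᵥ A *ᵥ X - v ⬝ᵥ b = t * δ := by
  have map_residual : (f ∘ v) ⬝ᵥ (A.map f *ᵥ (f ∘ X) - f ∘ b) = f (v ⬝ᵥ A *ᵥ X - v ⬝ᵥ b) := by
    rw [← comp_mulVec, dotProduct_sub, map_sub, f.map_dotProduct, f.map_dotProduct]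
  rw [absStepSize, map_residual, div_eq_iff ((map_ne_zero_iff f hf).mpr hδ), ← map_mul, hf.eq_iff]

namespace IsAbaffianRecursion

variable [DecidableEq κ]

theorem delta_ne_zero (hH : IsAbaffianRecursion f A v H s δ w) (i : Fin m) : δ i ≠ 0 := fun h =>
  hH.pivot_ne_zero i (funext fun a => zero_dvd_iff.mp (h ▸ hH.dvd_pivot i a))

theorem pivot_eq (hf : Function.Injective f) (hH : IsAbaffianRecursion f A v H s δ w) {i : Fin m}
    {G : Matrix κ κ R} (hG : H i = G.map f) : s i = G *ᵥ (v i ᵥ* A) := by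
  apply hf.comp_left
  beta_reduce
  rw [hH.map_pivot, hG, mulVec_transpose, ← comp_vecMul, ← comp_mulVec]

theorem exists_map_eq_add_one (hf : Function.Injective f)
    (hH : IsAbaffianRecursion f A v H s δ w) {i : Fin m} {G : Matrix κ κ R} (hG : H i = G.map f) :
    ∃ G' : Matrix κ κ R, H (i + 1) = G'.map f ∧ ∀ d, d ∈ LinearMap.range G'.vecMulLinear ↔
      d ∈ LinearMap.range G.vecMulLinear ∧ (v i ᵥ* A) ⬝ᵥ d = 0 := by
  have := hf.noZeroDivisors f (map_zero f) (map_mul f)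
  have hδ := hH.delta_ne_zero i
  have hs := hH.pivot_eq hf hG
  choose q hq using hH.dvd_pivot i
  have hsq : s i = δ i • q := funext hq
  refine ⟨G - vecMulVec q (w i ᵥ* G), ?_, ?_⟩
  · rw [hH.update, hG, hsq, map_sub_vecMulVec f G ((map_ne_zero_iff f hf).mpr hδ)]
  · exact mem_range_vecMulLinear_sub_vecMulVec_iff hδ (hs ▸ hsq) (hs ▸ hH.dotProduct_pivot i)

theorem exists_map_eq (hf : Function.Injective f) (hH : IsAbaffianRecursion f A v H s δ w) {i : ℕ}
    (hi : i ≤ m) :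
    ∃ G : Matrix κ κ R, H i = G.map f ∧
      ∀ d, d ∈ LinearMap.range G.vecMulLinear ↔ IsPartialSolution A 0 v i d := by
  induction i with
  | zero =>
    obtain ⟨G, hG_unit, hG⟩ := hH.initial
    exact ⟨G, hG, fun d => iff_of_true (vecMul_surjective_iff_isUnit.mpr hG_unit d) .zero⟩
  | succ i ih =>
    obtain ⟨G, hG, mem_range_iff⟩ := ih (Nat.le_of_succ_le hi)
    obtain ⟨G', hG', mem_range_iff'⟩ := hH.exists_map_eq_add_one hf (i := ⟨i, hi⟩) hG
    refine ⟨G', hG', fun d => ?_⟩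
    rw [mem_range_iff', mem_range_iff, ← dotProduct_mulVec,
      IsPartialSolution.add_one_iff ⟨i, hi⟩, dotProduct_zero]

theorem delta_dvd_residual (hf : Function.Injective f) (hH : IsAbaffianRecursion f A v H s δ w)
    {i : Fin m} {X y : κ → R} (hX : IsPartialSolution A b v i X) (hy : A *ᵥ y = b) :
    δ i ∣ v i ⬝ᵥ A *ᵥ X - v i ⬝ᵥ b := by
  obtain ⟨G, hG, mem_range_iff⟩ := hH.exists_map_eq hf i.isLt.le
  obtain ⟨u, hu⟩ : X - y ∈ LinearMap.range G.vecMulLinear :=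
    (mem_range_iff _).mpr (by simpa only [sub_self] using hX.sub (.of_mulVec_eq hy i))
  have residual_eq : v i ⬝ᵥ A *ᵥ X - v i ⬝ᵥ b = u ⬝ᵥ s i := by
    rw [← hy, ← dotProduct_sub, ← mulVec_sub, ← hu, vecMulLinear_apply, dotProduct_mulVec_vecMul,
      ← hH.pivot_eq hf hG]
  rw [residual_eq]
  exact Finset.dvd_sum fun a _ => (hH.dvd_pivot i a).mul_left _

end IsAbaffianRecursion

namespace IsABSIterate

variable [DecidableEq κ]

theorem exists_eq_comp_add_one (hf : Function.Injective f)
    (hH : IsAbaffianRecursion f A v H s δ w) (hx : IsABSIterate f A b v H s δ z x) {i : Fin m}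
    {X : κ → R} (hX : x i = f ∘ X) (hX_sol : IsPartialSolution A b v i X)
    (ht : ∃ t, absStepSize f A b (v i) (δ i) (x i) = f t) :
    ∃ X' : κ → R, x (i + 1) = f ∘ X' ∧ IsPartialSolution A b v (i + 1) X' := by
  obtain ⟨G, hG, mem_range_iff⟩ := hH.exists_map_eq hf i.isLt.le
  obtain ⟨t, ht⟩ := ht
  have residual_eq : v i ⬝ᵥ A *ᵥ X - v i ⬝ᵥ b = t * δ i :=
    (absStepSize_comp_eq_map_iff hf (hH.delta_ne_zero i) X t).mp (hX ▸ ht)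
  have direction_sol : IsPartialSolution A 0 v i ((t • z i) ᵥ* G) :=
    (mem_range_iff _).mp ⟨_, rfl⟩
  have dotProduct_direction : v i ⬝ᵥ A *ᵥ ((t • z i) ᵥ* G) = t * δ i := by
    rw [dotProduct_mulVec_vecMul, ← hH.pivot_eq hf hG, smul_dotProduct, hx.dotProduct_pivot,
      smul_eq_mul]
  refine ⟨X - (t • z i) ᵥ* G, ?_, (IsPartialSolution.add_one_iff i).mpr ⟨?_, ?_⟩⟩
  · rw [hx.update, ht, hX, hG, mulVec_transpose, ← comp_vecMul]
    ext a
    simp [smul_vecMul]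
  · simpa only [sub_zero] using hX_sol.sub direction_sol
  · rw [mulVec_sub, dotProduct_sub, dotProduct_direction, ← residual_eq, sub_sub_cancel]

theorem exists_eq_comp (hf : Function.Injective f) (hH : IsAbaffianRecursion f A v H s δ w)
    (hx : IsABSIterate f A b v H s δ z x) {i : ℕ} (hi : i ≤ m)
    (ht : ∀ j : Fin m, (j : ℕ) < i → ∃ t, absStepSize f A b (v j) (δ j) (x j) = f t) :
    ∃ X : κ → R, x i = f ∘ X ∧ IsPartialSolution A b v i X := by
  induction i with
  | zero => exact hx.initial.imp fun X hX => ⟨hX, .zero⟩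
  | succ i ih =>
    obtain ⟨X, hX, hX_sol⟩ := ih (Nat.le_of_succ_le hi) fun j hj => ht j (hj.trans i.lt_add_one)
    exact hx.exists_eq_comp_add_one hf hH (i := ⟨i, hi⟩) hX hX_sol (ht _ i.lt_add_one)

theorem exists_absStepSize_eq (hf : Function.Injective f) (hH : IsAbaffianRecursion f A v H s δ w)
    (hx : IsABSIterate f A b v H s δ z x) {y : κ → R} (hy : A *ᵥ y = b) (i : Fin m) :
    ∃ t, absStepSize f A b (v i) (δ i) (x i) = f t := by
  induction i using WellFoundedLT.induction with
  | ind i ih =>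
    obtain ⟨X, hX, hX_sol⟩ := hx.exists_eq_comp hf hH i.isLt.le ih
    obtain ⟨t, ht⟩ := hH.delta_dvd_residual hf hX_sol hy
    exact ⟨t, hX ▸ (absStepSize_comp_eq_map_iff hf (hH.delta_ne_zero i) X t).mpr
      (ht.trans (mul_comm _ _))⟩

end IsABSIterate

theorem integer_abaffian_solvability_criterion_general [DecidableEq κ]
    (hf : Function.Injective f) {A : Matrix (Fin m) κ R} {b : Fin m → R} {v : Fin m → Fin m → R}
    (hv : LinearIndependent R v) (hH : IsAbaffianRecursion f A v H s δ w)
    (hx : IsABSIterate f A b v H s δ z x) :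
    (∃ y, A *ᵥ y = b) ↔ ∀ i, ∃ t, absStepSize f A b (v i) (δ i) (x i) = f t := by
  constructor
  · rintro ⟨y, hy⟩
    exact hx.exists_absStepSize_eq hf hH hy
  · intro ht
    obtain ⟨X, -, hX⟩ := hx.exists_eq_comp hf hH le_rfl fun j _ => ht j
    exact ⟨X, hX.mulVec_eq hv⟩

end Abaffian

/-- **Integer solvability test of the ABS algorithm for Diophantine systems.**
Under the integer Abaffian recursion (`H 0 = H₁` unimodular, linearly independent
integer scaling vectors `v_i`, nonzero integer vectors `s_i = H_i Aᵀ v_i`,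
`δ_i = gcd(s_i)`, integer `w_i, z_i` with `w_iᵀ s_i = z_iᵀ s_i = δ_i`), with
integer starting point `x₁` and rational iterates
`x_{i+1} = x_i − (v_iᵀ(A x_i − b)/δ_i) H_iᵀ z_i`, the system `A x = b` has an
integer solution iff every ratio `v_iᵀ(A x_i − b)/δ_i` is an integer. -/
theorem integer_abaffian_solvability_criterion
    (m n : ℕ) (hmn : m ≤ n)
    (A : Matrix (Fin m) (Fin n) ℤ) (b : Fin m → ℤ)
    (v : Fin m → Fin m → ℤ) (hv : LinearIndependent ℤ v)
    (H1 : Matrix (Fin n) (Fin n) ℤ) (hH1 : IsUnit H1.det)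
    (H : ℕ → Matrix (Fin n) (Fin n) ℚ)
    (hH0 : H 0 = H1.map (Int.cast : ℤ → ℚ))
    (s : Fin m → Fin n → ℤ)
    (hs : ∀ i : Fin m,
      (fun a => ((s i a : ℤ) : ℚ)) =
        H ↑i *ᵥ ((A.map (Int.cast : ℤ → ℚ))ᵀ *ᵥ fun k => ((v i k : ℤ) : ℚ)))
    (hs0 : ∀ i : Fin m, s i ≠ 0)
    (w z : Fin m → Fin n → ℤ)
    (hw : ∀ i : Fin m, w i ⬝ᵥ s i = Finset.univ.gcd (s i))
    (hz : ∀ i : Fin m, z i ⬝ᵥ s i = Finset.univ.gcd (s i))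
    (hH : ∀ i : Fin m,
      H (↑i + 1) = H ↑i -
        (((Finset.univ.gcd (s i) : ℤ) : ℚ))⁻¹ •
          vecMulVec (fun a => ((s i a : ℤ) : ℚ))
            ((fun k => ((w i k : ℤ) : ℚ)) ᵥ* H ↑i))
    (x : ℕ → Fin n → ℚ) (x1 : Fin n → ℤ)
    (hx0 : x 0 = fun a => ((x1 a : ℤ) : ℚ))
    (hx : ∀ i : Fin m,
      x (↑i + 1) = x ↑i -
        (((fun k => ((v i k : ℤ) : ℚ)) ⬝ᵥ
            ((A.map (Int.cast : ℤ → ℚ)) *ᵥ x ↑i - fun k => ((b k : ℤ) : ℚ))) /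
          ((Finset.univ.gcd (s i) : ℤ) : ℚ)) •
          ((H ↑i)ᵀ *ᵥ fun a => ((z i a : ℤ) : ℚ))) :
    (∃ y : Fin n → ℤ, A *ᵥ y = b) ↔
    (∀ i : Fin m, ∃ t : ℤ,
      ((fun k => ((v i k : ℤ) : ℚ)) ⬝ᵥ
          ((A.map (Int.cast : ℤ → ℚ)) *ᵥ x ↑i - fun k => ((b k : ℤ) : ℚ))) /
        ((Finset.univ.gcd (s i) : ℤ) : ℚ) = (t : ℚ)) := by
  exact integer_abaffian_solvability_criterion_general (f := Int.castRingHom ℚ) Int.cast_injective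
    hv ⟨⟨H1, (isUnit_iff_isUnit_det H1).mpr hH1, hH0⟩, hs, hs0,
      fun i a => Finset.gcd_dvd (Finset.mem_univ a), hw, hH⟩ ⟨⟨x1, hx0⟩, hz, hx⟩
end

section
/- Let Y ∈ ℝ^{n×n} be symmetric positive definite and let μ, Λ > 0 satisfy μ‖u‖₂² ≤ uᵀYu ≤ Λ‖u‖₂² for all u ∈ ℝⁿ. Let x*, x_k ∈ ℝⁿ, set e_k = x_k − x*, let p_k ∈ ℝⁿ be nonzero, define x_{k+1} = x_k − (p_kᵀ Y e_k / p_kᵀ Y p_k) p_k and e_{k+1} = x_{k+1} − x*. If γ > 0 satisfies |p_kᵀ Y e_k| ≥ γ ‖p_k‖₂ ‖Y e_k‖₂, then ‖e_{k+1}‖_Y ≤ (1 − γ²·μ/Λ)^{1/2} ‖e_k‖_Y, where ‖u‖_Y = (uᵀ Y u)^{1/2}. -/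
open Matrix

/-!
The step makes the new error `e₁` conjugate to the search direction, `⟪p, T e₁⟫ = 0`, so it lowers
the squared energy norm `⟪e, T e⟫` by exactly `|⟪p, T e⟫|² / ⟪p, T p⟫`. By the angle condition and
`⟪p, T p⟫ ≤ Λ ‖p‖²` this decrease is at least `(γ² / Λ) ‖T e‖²`, and `‖T e‖² ≥ μ ⟪e, T e⟫` because
`μ ‖e‖² ≤ ⟪e, T e⟫ ≤ ‖e‖ ‖T e‖`.
-/

section InnerProductSpace

open RCLike
open scoped InnerProductSpace

variable {𝕜 E : Type*} [RCLike 𝕜] [NormedAddCommGroup E] [InnerProductSpace 𝕜 E]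

/-- The `T`-weighted norm `‖u‖_T = ⟪u, T u⟫^{1/2}`, which measures the error of the iteration. The
real part only serves to land in `ℝ`: `⟪u, T u⟫` is already real when `T` is symmetric. -/
noncomputable def energyNorm (T : E →ₗ[𝕜] E) (u : E) : ℝ :=
  √(re ⟪u, T u⟫_𝕜)

/-- The truncated ABS step from the iterate `x` along the search vector `p`, for the equation
`T x = T xstar`. The coefficient has junk value `0` when `⟪p, T p⟫ = 0`. -/
noncomputable def absStep (T : E →ₗ[𝕜] E) (xstar p x : E) : E :=
  x - (⟪p, T (x - xstar)⟫_𝕜 / ⟪p, T p⟫_𝕜) • p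

lemma absStep_sub (T : E →ₗ[𝕜] E) (xstar p x : E) :
    absStep T xstar p x - xstar =
      (x - xstar) - (⟪p, T (x - xstar)⟫_𝕜 / ⟪p, T p⟫_𝕜) • p :=
  sub_right_comm _ _ _

lemma inner_map_absStep_sub_eq_zero {T : E →ₗ[𝕜] E} {p : E} (hp : ⟪p, T p⟫_𝕜 ≠ 0) (xstar x : E) :
    ⟪p, T (absStep T xstar p x - xstar)⟫_𝕜 = 0 := by
  rw [absStep_sub, map_sub, map_smul, inner_sub_right, inner_smul_right, div_mul_cancel₀ _ hp,
    sub_self]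

lemma re_inner_map_absStep_sub {T : E →ₗ[𝕜] E} (hT : T.IsSymmetric) {p : E}
    (hp : ⟪p, T p⟫_𝕜 ≠ 0) (xstar x : E) :
    re ⟪absStep T xstar p x - xstar, T (absStep T xstar p x - xstar)⟫_𝕜 =
      re ⟪x - xstar, T (x - xstar)⟫_𝕜 - ‖⟪p, T (x - xstar)⟫_𝕜‖ ^ 2 / re ⟪p, T p⟫_𝕜 := by
  have conjugate := inner_map_absStep_sub_eq_zero hp xstar x
  rw [absStep_sub] at conjugate ⊢
  set e := x - xstar
  set c := ⟪p, T e⟫_𝕜 / ⟪p, T p⟫_𝕜 with hc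
  have cross : c * ⟪e, T p⟫_𝕜 = ((‖⟪p, T e⟫_𝕜‖ ^ 2 / re ⟪p, T p⟫_𝕜 : ℝ) : 𝕜) := by
    rw [hc, ← hT e, ← inner_conj_symm (T e), div_mul_eq_mul_div, mul_conj,
      ← hT.coe_re_inner_self_apply p, ofReal_div, ofReal_pow, ofReal_re]
  calc re ⟪e - c • p, T (e - c • p)⟫_𝕜
      = re ⟪e, T (e - c • p)⟫_𝕜 := by
        rw [inner_sub_left, inner_smul_left, conjugate, mul_zero, sub_zero]
    _ = re ⟪e, T e⟫_𝕜 - ‖⟪p, T e⟫_𝕜‖ ^ 2 / re ⟪p, T p⟫_𝕜 := by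
        rw [map_sub, map_smul, inner_sub_right, inner_smul_right, cross, map_sub, ofReal_re]

lemma mul_re_inner_le_norm_sq {u v : E} {μ : ℝ} (hμ : 0 ≤ μ) (h : μ * ‖u‖ ^ 2 ≤ re ⟪u, v⟫_𝕜) :
    μ * re ⟪u, v⟫_𝕜 ≤ ‖v‖ ^ 2 := by
  calc μ * re ⟪u, v⟫_𝕜
      = 2 * μ * re ⟪u, v⟫_𝕜 - μ * re ⟪u, v⟫_𝕜 := by ring
    _ ≤ 2 * μ * (‖u‖ * ‖v‖) - μ * (μ * ‖u‖ ^ 2) := by gcongr; exact re_inner_le_norm u v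
    _ = ‖v‖ ^ 2 - (‖v‖ - μ * ‖u‖) ^ 2 := by ring
    _ ≤ ‖v‖ ^ 2 := sub_le_self _ (sq_nonneg _)

lemma mul_re_inner_le_norm_inner_sq_div {T : E → E} {p e : E} {μ Λ γ : ℝ} (hμ : 0 ≤ μ)
    (hγ : 0 ≤ γ) (hp : 0 < re ⟪p, T p⟫_𝕜) (hlow : μ * ‖e‖ ^ 2 ≤ re ⟪e, T e⟫_𝕜)
    (hhigh : re ⟪p, T p⟫_𝕜 ≤ Λ * ‖p‖ ^ 2) (hangle : γ * ‖p‖ * ‖T e‖ ≤ ‖⟪p, T e⟫_𝕜‖) :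
    γ ^ 2 * μ / Λ * re ⟪e, T e⟫_𝕜 ≤ ‖⟪p, T e⟫_𝕜‖ ^ 2 / re ⟪p, T p⟫_𝕜 := by
  have hΛ : 0 < Λ := pos_of_mul_pos_left (hp.trans_le hhigh) (sq_nonneg _)
  have energy_nonneg : 0 ≤ re ⟪e, T e⟫_𝕜 := le_trans (by positivity) hlow
  rw [le_div_iff₀ hp]
  calc γ ^ 2 * μ / Λ * re ⟪e, T e⟫_𝕜 * re ⟪p, T p⟫_𝕜
      ≤ γ ^ 2 * μ / Λ * re ⟪e, T e⟫_𝕜 * (Λ * ‖p‖ ^ 2) := by gcongr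
    _ = γ ^ 2 * ‖p‖ ^ 2 * (μ * re ⟪e, T e⟫_𝕜) := by field_simp
    _ ≤ γ ^ 2 * ‖p‖ ^ 2 * ‖T e‖ ^ 2 := by gcongr; exact mul_re_inner_le_norm_sq hμ hlow
    _ = (γ * ‖p‖ * ‖T e‖) ^ 2 := by ring
    _ ≤ ‖⟪p, T e⟫_𝕜‖ ^ 2 := by gcongr

theorem truncatedABS_linear_convergence_general {T : E →ₗ[𝕜] E} (hT : T.IsSymmetric) {μ Λ γ : ℝ}
    (hμ : 0 < μ) (hlow : ∀ u, μ * ‖u‖ ^ 2 ≤ re ⟪u, T u⟫_𝕜)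
    (hhigh : ∀ u, re ⟪u, T u⟫_𝕜 ≤ Λ * ‖u‖ ^ 2) (xstar x : E) {p : E} (hp : p ≠ 0) (hγ : 0 ≤ γ)
    (hangle : γ * ‖p‖ * ‖T (x - xstar)‖ ≤ ‖⟪p, T (x - xstar)⟫_𝕜‖) :
    energyNorm T (absStep T xstar p x - xstar) ≤
      √(1 - γ ^ 2 * μ / Λ) * energyNorm T (x - xstar) := by
  have hpT : 0 < re ⟪p, T p⟫_𝕜 := lt_of_lt_of_le (by positivity) (hlow p)
  have hpT_ne : ⟪p, T p⟫_𝕜 ≠ 0 := fun h ↦ by simp [h] at hpT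
  have energy_nonneg : 0 ≤ re ⟪x - xstar, T (x - xstar)⟫_𝕜 := le_trans (by positivity) (hlow _)
  have decrease := mul_re_inner_le_norm_inner_sq_div hμ.le hγ hpT (hlow _) (hhigh p) hangle
  rw [energyNorm, energyNorm, ← Real.sqrt_mul' _ energy_nonneg, re_inner_map_absStep_sub hT hpT_ne,
    sub_mul, one_mul]
  exact Real.sqrt_le_sqrt (sub_le_sub_left decrease _)

end InnerProductSpace

section EuclideanSpace

open RCLike WithLp
open scoped InnerProductSpace

variable {𝕜 n : Type*} [RCLike 𝕜] [Fintype n]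

lemma inner_toLp_toLp_eq_star_dotProduct (u v : n → 𝕜) :
    ⟪toLp 2 u, toLp 2 v⟫_𝕜 = star u ⬝ᵥ v := by
  rw [EuclideanSpace.inner_toLp_toLp, dotProduct_comm]

lemma norm_sq_toLp_eq_re_star_dotProduct (u : n → 𝕜) : ‖toLp 2 u‖ ^ 2 = re (star u ⬝ᵥ u) := by
  rw [norm_sq_eq_re_inner (𝕜 := 𝕜), inner_toLp_toLp_eq_star_dotProduct]

lemma norm_toLp_eq_sqrt_re_star_dotProduct (u : n → 𝕜) :
    ‖toLp 2 u‖ = √(re (star u ⬝ᵥ u)) := by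
  rw [← norm_sq_toLp_eq_re_star_dotProduct, Real.sqrt_sq (norm_nonneg _)]

variable [DecidableEq n]

lemma energyNorm_toEuclideanLin (A : Matrix n n 𝕜) (u : n → 𝕜) :
    energyNorm A.toEuclideanLin (toLp 2 u) = √(re (star u ⬝ᵥ A *ᵥ u)) := by
  rw [energyNorm, toLpLin_toLp, toLin'_apply, inner_toLp_toLp_eq_star_dotProduct]

lemma absStep_toEuclideanLin (A : Matrix n n 𝕜) (xstar p x : n → 𝕜) :
    absStep A.toEuclideanLin (toLp 2 xstar) (toLp 2 p) (toLp 2 x) =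
      toLp 2 (x - ((star p ⬝ᵥ A *ᵥ (x - xstar)) / (star p ⬝ᵥ A *ᵥ p)) • p) := by
  simp only [absStep, ← toLp_sub, ← toLp_smul, toLpLin_toLp, toLin'_apply,
    inner_toLp_toLp_eq_star_dotProduct]

end EuclideanSpace

/-- **Linear convergence rate of the truncated ABS iteration (Theorem 4).**
If `Y` is symmetric positive definite with `μ‖u‖₂² ≤ uᵀYu ≤ Λ‖u‖₂²`, the step
`x_{k+1} = x_k − (p_kᵀ Y e_k / p_kᵀ Y p_k) p_k` with a nonzero search vector
`p_k` satisfying the angle condition `|p_kᵀ Y e_k| ≥ γ‖p_k‖₂‖Y e_k‖₂`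
contracts the `Y`-weighted error norm by the factor `(1 − γ²μ/Λ)^{1/2}`. -/
theorem truncatedABS_linear_convergence
    (n : ℕ) (Y : Matrix (Fin n) (Fin n) ℝ)
    (hYsymm : Y.IsSymm) (hYpd : Y.PosDef)
    (μ Λ : ℝ) (hμ : 0 < μ) (hΛ : 0 < Λ)
    (hlow : ∀ u : Fin n → ℝ, μ * (u ⬝ᵥ u) ≤ u ⬝ᵥ (Y *ᵥ u))
    (hhigh : ∀ u : Fin n → ℝ, u ⬝ᵥ (Y *ᵥ u) ≤ Λ * (u ⬝ᵥ u))
    (xstar xk : Fin n → ℝ) (p : Fin n → ℝ) (hp : p ≠ 0)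
    (ek : Fin n → ℝ) (hek : ek = xk - xstar)
    (xk1 : Fin n → ℝ)
    (hxk1 : xk1 = xk - ((p ⬝ᵥ (Y *ᵥ ek)) / (p ⬝ᵥ (Y *ᵥ p))) • p)
    (ek1 : Fin n → ℝ) (hek1 : ek1 = xk1 - xstar)
    (γ : ℝ) (hγ : 0 < γ)
    (hangle : γ * Real.sqrt (p ⬝ᵥ p) * Real.sqrt ((Y *ᵥ ek) ⬝ᵥ (Y *ᵥ ek)) ≤
      |p ⬝ᵥ (Y *ᵥ ek)|) :
    Real.sqrt (ek1 ⬝ᵥ (Y *ᵥ ek1)) ≤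
      Real.sqrt (1 - γ ^ 2 * μ / Λ) * Real.sqrt (ek ⬝ᵥ (Y *ᵥ ek)) := by
  subst hek hxk1 hek1
  have lower : ∀ u, μ * ‖u‖ ^ 2 ≤ RCLike.re (inner ℝ u (Y.toEuclideanLin u)) :=
    (WithLp.toLp_surjective 2).forall.mpr fun u ↦ by
      simpa [norm_sq_toLp_eq_re_star_dotProduct, inner_toLp_toLp_eq_star_dotProduct] using hlow u
  have upper : ∀ u, RCLike.re (inner ℝ u (Y.toEuclideanLin u)) ≤ Λ * ‖u‖ ^ 2 :=
    (WithLp.toLp_surjective 2).forall.mpr fun u ↦ by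
      simpa [norm_sq_toLp_eq_re_star_dotProduct, inner_toLp_toLp_eq_star_dotProduct] using hhigh u
  have contraction := truncatedABS_linear_convergence_general
    (isSymmetric_toEuclideanLin_iff.mpr hYpd.isHermitian) hμ lower upper
    (WithLp.toLp 2 xstar) (WithLp.toLp 2 xk) (p := WithLp.toLp 2 p) (by simpa using hp) hγ.le
    (by simpa [← WithLp.toLp_sub, norm_toLp_eq_sqrt_re_star_dotProduct,
      inner_toLp_toLp_eq_star_dotProduct] using hangle)
  simpa [absStep_toEuclideanLin, ← WithLp.toLp_sub, energyNorm_toEuclideanLin] using contraction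
end

section
/- Under the Huang recursion with linearly independent rows a₁,…,a_m, the recursion is well defined with a_iᵀ H_i a_i > 0 for every i, the search vectors are mutually orthogonal (p_iᵀ pⱼ = 0 for j < i), and they coincide with the Gram–Schmidt vectors of a₁,…,a_m: p_i = a_i − Σ_{j<i} (a_iᵀ pⱼ / pⱼᵀ pⱼ) pⱼ for every i = 1,…,m. -/
open Matrix

/-!
For a symmetric idempotent `P` and `u = P a` one has `aᵀ P a = uᵀ u`, so the Huang update replaces
`P` by `P - u uᵀ / (uᵀ u)`, which is again symmetric and idempotent. Hence
`H_k = I - ∑_{j < k} p_j p_jᵀ / (p_jᵀ p_j)`, and applying it to `a_k` is the Gram–Schmidt formula.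
Since `v - H_k v` always lies in the span of the rows already processed, `H_k a_k = 0` would
contradict linear independence.
-/

section HuangUpdate

variable {K ι : Type*} [Field K] [Fintype ι]

/-- One step of the Huang recursion with row `a`: the rank-one correction of `H`, with pivot
`aᵀ H a`, that makes `a` a null vector. When the pivot vanishes, `0⁻¹ = 0` leaves `H` unchanged. -/
def huangUpdate (H : Matrix ι ι K) (a : ι → K) : Matrix ι ι K :=
  H - (a ⬝ᵥ (H *ᵥ a))⁻¹ • vecMulVec (H *ᵥ a) (a ᵥ* H)

theorem huangUpdate_mulVec (H : Matrix ι ι K) (a v : ι → K) :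
    huangUpdate H a *ᵥ v =
      H *ᵥ v - ((a ⬝ᵥ (H *ᵥ v)) / (a ⬝ᵥ (H *ᵥ a))) • (H *ᵥ a) := by
  rw [huangUpdate, sub_mulVec, smul_mulVec, vecMulVec_mulVec, op_smul_eq_smul, smul_smul,
    dotProduct_mulVec a H v, div_eq_inv_mul]

theorem huangUpdate_mulVec_eq_zero {H : Matrix ι ι K} {v : ι → K} (hv : H *ᵥ v = 0)
    (a : ι → K) : huangUpdate H a *ᵥ v = 0 := by
  rw [huangUpdate_mulVec, hv, dotProduct_zero, zero_div, zero_smul, sub_zero]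

theorem huangUpdate_mulVec_mulVec_self {H : Matrix ι ι K} (hH : IsIdempotentElem H) {a : ι → K}
    (ha : a ⬝ᵥ (H *ᵥ a) ≠ 0) : huangUpdate H a *ᵥ (H *ᵥ a) = 0 := by
  rw [huangUpdate_mulVec, mulVec_mulVec, hH.eq, div_self ha, one_smul, sub_self]

theorem isSymm_huangUpdate {H : Matrix ι ι K} (hH : H.IsSymm) (a : ι → K) :
    (huangUpdate H a).IsSymm := by
  have vecMul_eq : a ᵥ* H = H *ᵥ a := by rw [← mulVec_transpose, hH.eq]
  rw [IsSymm, huangUpdate, vecMul_eq, transpose_sub, transpose_smul, transpose_vecMulVec, hH.eq]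

theorem isIdempotentElem_huangUpdate {H : Matrix ι ι K} (hH : IsIdempotentElem H) (a : ι → K) :
    IsIdempotentElem (huangUpdate H a) := by
  by_cases ha : a ⬝ᵥ (H *ᵥ a) = 0
  · rwa [huangUpdate, ha, _root_.inv_zero, zero_smul, sub_zero]
  · have mul_right : huangUpdate H a * H = huangUpdate H a := by
      rw [huangUpdate, sub_mul, smul_mul_assoc, vecMulVec_mul, vecMul_vecMul, hH.eq]
    calc
      huangUpdate H a * huangUpdate H a =
          huangUpdate H a * H -
            (a ⬝ᵥ (H *ᵥ a))⁻¹ • vecMulVec (huangUpdate H a *ᵥ (H *ᵥ a)) (a ᵥ* H) := by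
        rw [← mul_vecMulVec, ← mul_smul_comm, ← mul_sub, ← huangUpdate]
      _ = huangUpdate H a := by
        rw [huangUpdate_mulVec_mulVec_self hH ha, zero_vecMulVec, smul_zero, sub_zero, mul_right]

end HuangUpdate

theorem dotProduct_mulVec_of_isSymm_of_isIdempotentElem {R ι : Type*} [CommSemiring R] [Fintype ι]
    {P : Matrix ι ι R} (hsymm : P.IsSymm) (hidem : IsIdempotentElem P) (v w : ι → R) :
    v ⬝ᵥ (P *ᵥ w) = (P *ᵥ v) ⬝ᵥ (P *ᵥ w) := by
  conv_lhs => rw [← hidem.eq, ← mulVec_mulVec, dotProduct_mulVec, ← mulVec_transpose, hsymm.eq]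

/-- `H` is a sequence of Huang matrices for the rows `a`. The rows are indexed from `0`, so `H i`
is the matrix in force when row `a i` is processed; `H k` is unconstrained for `k > m`. -/
structure IsHuangSequence {K ι : Type*} [Field K] [Fintype ι] [DecidableEq ι] {m : ℕ}
    (a : Fin m → ι → K) (H : ℕ → Matrix ι ι K) : Prop where
  zero : H 0 = 1
  succ (i : Fin m) : H (i + 1) = huangUpdate (H i) (a i)

namespace IsHuangSequence

section Field

variable {K ι : Type*} [Field K] [Fintype ι] [DecidableEq ι] {m : ℕ}
  {a : Fin m → ι → K} {H : ℕ → Matrix ι ι K}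

theorem isSymm (h : IsHuangSequence a H) (k : Fin (m + 1)) : (H k).IsSymm := by
  induction k using Fin.induction with
  | zero => simpa only [Fin.val_zero, h.zero] using isSymm_one
  | succ i ih => exact (h.succ i).symm ▸ isSymm_huangUpdate ih (a i)

theorem isIdempotentElem (h : IsHuangSequence a H) (k : Fin (m + 1)) :
    IsIdempotentElem (H k) := by
  induction k using Fin.induction with
  | zero => simpa only [Fin.val_zero, h.zero] using IsIdempotentElem.one
  | succ i ih => exact (h.succ i).symm ▸ isIdempotentElem_huangUpdate ih (a i)

theorem dotProduct_mulVec_eq (h : IsHuangSequence a H) (i : Fin m) (v w : ι → K) :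
    v ⬝ᵥ (H i *ᵥ w) = (H i *ᵥ v) ⬝ᵥ (H i *ᵥ w) :=
  dotProduct_mulVec_of_isSymm_of_isIdempotentElem (h.isSymm i.castSucc)
    (h.isIdempotentElem i.castSucc) v w

theorem sub_mulVec_mem_span (h : IsHuangSequence a H) (k : Fin (m + 1)) (v : ι → K) :
    v - H k *ᵥ v ∈ Submodule.span K (a '' {j | j.castSucc < k}) := by
  induction k using Fin.induction generalizing v with
  | zero => simp [h.zero]
  | succ i ih =>
    have mem_span_succ (w : ι → K) :
        w - H i *ᵥ w ∈ Submodule.span K (a '' {j | j.castSucc < i.succ}) :=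
      Submodule.span_mono
        (Set.image_mono fun j hj => lt_trans hj (Fin.castSucc_lt_succ (i := i))) (ih w)
    have row_mem : a i ∈ Submodule.span K (a '' {j | j.castSucc < i.succ}) :=
      Submodule.subset_span ⟨i, Fin.castSucc_lt_succ, rfl⟩
    have search_mem : H i *ᵥ a i ∈ Submodule.span K (a '' {j | j.castSucc < i.succ}) := by
      simpa only [sub_sub_cancel] using Submodule.sub_mem _ row_mem (mem_span_succ (a i))
    rw [Fin.val_succ, h.succ, huangUpdate_mulVec, sub_sub_eq_add_sub, add_sub_right_comm]
    exact Submodule.add_mem _ (mem_span_succ v) (Submodule.smul_mem _ _ search_mem)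

theorem mulVec_ne_zero (h : IsHuangSequence a H) (ha : LinearIndependent K a) (i : Fin m) :
    H i *ᵥ a i ≠ 0 := by
  intro hzero
  have mem_span : a i ∈ Submodule.span K (a '' Set.Iio i) := by
    simpa [hzero, Set.Iio_def] using h.sub_mulVec_mem_span i.castSucc (a i)
  exact ha.notMem_span_image Set.self_notMem_Iio mem_span

theorem mulVec_mulVec_eq_zero (h : IsHuangSequence a H) {j : Fin m}
    (hj : a j ⬝ᵥ (H j *ᵥ a j) ≠ 0) {k : Fin (m + 1)} (hjk : j.castSucc < k) :
    H k *ᵥ (H j *ᵥ a j) = 0 := by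
  induction k using Fin.induction with
  | zero => exact absurd hjk (Fin.not_lt_zero _)
  | succ i ih =>
    rw [Fin.val_succ, h.succ]
    rcases (Fin.castSucc_lt_succ_iff.1 hjk).eq_or_lt with rfl | hji
    · exact huangUpdate_mulVec_mulVec_self (h.isIdempotentElem j.castSucc) hj
    · exact huangUpdate_mulVec_eq_zero (ih (Fin.castSucc_lt_castSucc_iff.2 hji)) (a i)

theorem mulVec_dotProduct_mulVec_eq_zero (h : IsHuangSequence a H) {i j : Fin m}
    (hj : a j ⬝ᵥ (H j *ᵥ a j) ≠ 0) (hji : j < i) :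
    (H i *ᵥ a i) ⬝ᵥ (H j *ᵥ a j) = 0 := by
  have symm : (H i)ᵀ = H i := h.isSymm i.castSucc
  have null : H i *ᵥ (H j *ᵥ a j) = 0 :=
    h.mulVec_mulVec_eq_zero hj (Fin.castSucc_lt_castSucc_iff.2 hji)
  rw [← symm, mulVec_transpose, ← dotProduct_mulVec, null, dotProduct_zero]

theorem mulVec_eq_sub_sum (h : IsHuangSequence a H) (k : Fin (m + 1)) (v : ι → K) :
    H k *ᵥ v = v - ∑ j : Fin m with j.castSucc < k,
      ((v ⬝ᵥ (H j *ᵥ a j)) / ((H j *ᵥ a j) ⬝ᵥ (H j *ᵥ a j))) • (H j *ᵥ a j) := by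
  induction k using Fin.induction with
  | zero => simp [h.zero]
  | succ i ih =>
    have filter_succ : ({j | j.castSucc < i.succ} : Finset (Fin m)) =
        insert i ({j | j.castSucc < i.castSucc} : Finset (Fin m)) := by
      ext j
      simp [le_iff_eq_or_lt]
    have symm_coeff : a i ⬝ᵥ (H i *ᵥ v) = v ⬝ᵥ (H i *ᵥ a i) := by
      rw [h.dotProduct_mulVec_eq, dotProduct_comm, ← h.dotProduct_mulVec_eq]
    rw [Fin.val_succ, h.succ, huangUpdate_mulVec, symm_coeff, h.dotProduct_mulVec_eq i (a i) (a i),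
      filter_succ, Finset.sum_insert (by simp), add_comm, ← sub_sub, ← ih, Fin.val_castSucc]

end Field

theorem pivot_pos {K ι : Type*} [Field K] [LinearOrder K] [IsStrictOrderedRing K] [Fintype ι]
    [DecidableEq ι] {m : ℕ} {a : Fin m → ι → K} {H : ℕ → Matrix ι ι K}
    (h : IsHuangSequence a H) (ha : LinearIndependent K a) (i : Fin m) :
    0 < a i ⬝ᵥ (H i *ᵥ a i) := by
  rw [h.dotProduct_mulVec_eq]
  have self_nonneg : 0 ≤ (H i *ᵥ a i) ⬝ᵥ (H i *ᵥ a i) :=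
    Finset.sum_nonneg fun _ _ => mul_self_nonneg _
  exact self_nonneg.lt_of_ne' (dotProduct_self_eq_zero.not.2 (h.mulVec_ne_zero ha i))

end IsHuangSequence

theorem huang_gram_schmidt_general {K ι : Type*} [Field K] [LinearOrder K] [IsStrictOrderedRing K]
    [Fintype ι] [DecidableEq ι] {m : ℕ} {a : Fin m → ι → K} (ha : LinearIndependent K a)
    {H : ℕ → Matrix ι ι K} (h : IsHuangSequence a H) {p : Fin m → ι → K}
    (hp : ∀ i : Fin m, p i = (H i)ᵀ *ᵥ a i) :
    (∀ i : Fin m, 0 < a i ⬝ᵥ (H i *ᵥ a i)) ∧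
    (∀ i j : Fin m, j < i → p i ⬝ᵥ p j = 0) ∧
    (∀ i : Fin m, p i = a i - ∑ j : Fin m with j < i, ((a i ⬝ᵥ p j) / (p j ⬝ᵥ p j)) • p j) := by
  have search_eq (i : Fin m) : p i = H i *ᵥ a i := by
    rw [hp, ← Fin.val_castSucc, (h.isSymm i.castSucc).eq]
  simp only [search_eq]
  refine ⟨h.pivot_pos ha, fun i j hji => ?_, fun i => ?_⟩
  · exact h.mulVec_dotProduct_mulVec_eq_zero (h.pivot_pos ha j).ne' hji
  · simpa only [Fin.val_castSucc, Fin.castSucc_lt_castSucc_iff] using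
      h.mulVec_eq_sub_sum i.castSucc (a i)

/-- **Huang algorithm and Gram–Schmidt.** Under the Huang recursion (`H 0 = I`,
`p_i = H_iᵀ a_i`, `H_{i+1} = H_i − (H_i a_i)(a_iᵀ H_i)/(a_iᵀ H_i a_i)`) applied
to linearly independent rows `a₁,…,a_m`, the recursion is well defined with
`a_iᵀ H_i a_i > 0` for every `i`, the search vectors are mutually orthogonal,
and they coincide with the Gram–Schmidt vectors of `a₁,…,a_m`. -/
theorem huang_gram_schmidt
    (m n : ℕ) (hmn : m ≤ n)
    (a : Fin m → Fin n → ℝ) (ha : LinearIndependent ℝ a)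
    (H : ℕ → Matrix (Fin n) (Fin n) ℝ) (hH0 : H 0 = 1)
    (p : Fin m → Fin n → ℝ)
    (hp : ∀ i : Fin m, p i = (H ↑i)ᵀ *ᵥ a i)
    (hH : ∀ i : Fin m,
      H (↑i + 1) = H ↑i -
        (a i ⬝ᵥ (H ↑i *ᵥ a i))⁻¹ •
          vecMulVec (H ↑i *ᵥ a i) (a i ᵥ* H ↑i)) :
    (∀ i : Fin m, 0 < a i ⬝ᵥ (H ↑i *ᵥ a i)) ∧
    (∀ i j : Fin m, j < i → p i ⬝ᵥ p j = 0) ∧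
    (∀ i : Fin m,
      p i = a i - ∑ j ∈ Finset.univ.filter (fun j : Fin m => j < i),
        ((a i ⬝ᵥ p j) / (p j ⬝ᵥ p j)) • p j) :=
  huang_gram_schmidt_general ha ⟨hH0, hH⟩ hp
end
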